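/- Let μ ∈ (0,∞) and a > 1 be fixed and let F_T, F_Λ be probability distributions on [0,∞) (the distributions of nonnegative random variables T and Λ). Let ζ denote the Riemann zeta function restricted to real arguments greater than 1, with derivatives ζ′ and ζ″. Then the conditions 0 ≤ E[T] < 1, E[Λ] = −ζ(a)/ζ′(a) and E[Λ²] < ∞ hold if and only if the functional equation F̂(s) = (1/ζ(a)) ∫₀^∞ ζ(a + λ·σ(s)) dF_Λ(λ) for all s ≥ 0 has exactly one solution: a probability distribution F on [0,∞) with mean μ and finite second moment (here σ is built from the unknown F, F_T and μ). Moreover, the unique solution F satisfies Var[F] = ((ζ″(a)·E[Λ²] − ζ(a) + ζ(a)·E[T])/(ζ(a)·(1 − E[T])))·μ². -/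

import Mathlib

/-!
Let `N` be zeta-distributed, `P(N = n) = n⁻ᵃ / ζ(a)`, independent of `Λ`, and let `G` be the law of
`Λ log N` (`zetaMix`). Since `E[e^{-u log N}] = ζ(a + u) / ζ(a)`, the functional equation is
`F̂ = Ĝ ∘ σ` (`sol_iff`), and the moments of `G` are `E[G] = -E[Λ] ζ′(a)/ζ(a)` and
`E[G²] = E[Λ²] ζ″(a)/ζ(a)` (`zetaMix_mean`, `zetaMix_sq`).

Necessity and variance. If `F` solves the equation, then `σ(s) = μ s - E[T] m₂ s²/2 + o(s²)` with
`m₂ = E[X²]`, and comparing both sides at orders one and two yields, in `[0,∞]`, `E[G] = 1` and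
`m₂ = E[G²] μ² + E[T] m₂` (`moment_identities`). The first identity is the value of `E[Λ]`. As
`m₂` is finite and `E[G²] > 0`, the second forces `E[Λ²] < ∞` and `E[T] < 1`, and solving it for
`m₂` gives the variance. The existence of a solution alone thus implies the moment conditions.

Sufficiency. `Ĝ` is Lipschitz with constant `E[G] = 1`, and `F ↦ σ_F` contracts
`sup_s |F̂(s) - Ĥ(s)| / s²` by the factor `E[T] < 1` (`sigmaT_contr`). Two solutions are at finite
distance because they share the mean `μ` and have finite second moments, hence they agree
(`fixed_unique`). For existence one iterates from the point mass at `μ`. Each iterate is the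
transform of a probability distribution (`step_exists`): if `T ≥ ε`, then `σ = c (1 - K̂)` is a
compound Poisson exponent and `Ĝ ∘ σ` a mixture of compound Poisson transforms; in general replace
`T` by `max T ε`, let `ε → 0` and use the continuity theorem (`LS_continuity`). The bounds
`1 - μ s ≤ F̂(s) ≤ 1 - μ s + C s²/2` (`MomBd`) are preserved by the iteration and by limits, and they
encode mean `μ` and second moment at most `C`, so the limit is a solution (`fixed_exists`).
-/

open MeasureTheory

/-- Laplace–Stieltjes transform of a (nonnegative) probability distribution. -/
noncomputable def LS (F : Measure ℝ) (s : ℝ) : ℝ := ∫ x, Real.exp (-(s * x)) ∂F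

/-- `σ(s) = ∫₀^∞ (1 − F̂(ts))/t dF_T(t)`, with the integrand at `t = 0` equal to `μ s`. -/
noncomputable def sigmaT (F FT : Measure ℝ) (μ : ℝ) (s : ℝ) : ℝ :=
  ∫ t, (if t = 0 then μ * s else (1 - LS F (t * s)) / t) ∂FT

/-- The Riemann zeta function on real arguments `> 1`: `ζ(s) = ∑_{n=1}^∞ n^{−s}`. -/
noncomputable def zetaR (s : ℝ) : ℝ := ∑' n : ℕ, ((n : ℝ) + 1) ^ (-s)

/-- The moment conditions: `E[T] < 1`, `E[Λ] = −ζ(a)/ζ′(a)`, `E[Λ²] < ∞`. -/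
def Cond (FT FL : Measure ℝ) (a : ℝ) : Prop :=
  (∫⁻ t, ENNReal.ofReal t ∂FT) < 1 ∧
  (∫⁻ l, ENNReal.ofReal l ∂FL) = ENNReal.ofReal (-(zetaR a / deriv zetaR a)) ∧
  (∫⁻ l, ENNReal.ofReal (l ^ 2) ∂FL) < ⊤

/-- `F` is a solution: a probability distribution on `[0,∞)` with mean `μ`, finite second
moment, satisfying `F̂(s) = (1/ζ(a)) ∫₀^∞ ζ(a + λ σ(s)) dF_Λ(λ)` for all `s ≥ 0`. -/
def Sol (FT FL : Measure ℝ) (μ a : ℝ) (F : Measure ℝ) : Prop :=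
  IsProbabilityMeasure F ∧ F (Set.Iio 0) = 0 ∧ (∫ x, x ∂F) = μ ∧
  Integrable (fun x => x ^ 2) F ∧
  ∀ s : ℝ, 0 ≤ s →
    LS F s = (1 / zetaR a) * ∫ l, zetaR (a + l * sigmaT F FT μ s) ∂FL

section
open Filter Topology
open scoped ENNReal

/-! ### Laplace transforms: bounds, uniqueness, continuity theorem -/

lemma ae_nn {F : Measure ℝ} (h : F (Set.Iio 0) = 0) : ∀ᵐ x ∂F, 0 ≤ x := by
  rw [ae_iff]; convert h using 2; ext x; simp

lemma exp_taylor_lower (u : ℝ) : 0 ≤ Real.exp (-u) - 1 + u := by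
  have := Real.add_one_le_exp (-u); linarith

lemma exp_taylor_upper {u : ℝ} (hu : 0 ≤ u) : Real.exp (-u) - 1 + u ≤ u ^ 2 / 2 := by
  have h := Real.quadratic_le_exp_of_nonneg hu
  have hp : 0 < Real.exp u := Real.exp_pos u
  rw [Real.exp_neg]
  have h2 : (Real.exp u)⁻¹ ≤ (1 + u + u ^ 2 / 2)⁻¹ := inv_anti₀ (by positivity) h
  have h3 : (1 + u + u ^ 2 / 2)⁻¹ ≤ 1 - u + u ^ 2 / 2 := by
    rw [inv_le_iff_one_le_mul₀ (by positivity)]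
    nlinarith [sq_nonneg (u ^ 2)]
  linarith

section LSbasics
variable {F : Measure ℝ} [IsProbabilityMeasure F] (h : F (Set.Iio 0) = 0)
include h

lemma LS_integrable {s : ℝ} (hs : 0 ≤ s) : Integrable (fun x => Real.exp (-(s * x))) F := by
  refine Integrable.of_bound (by fun_prop) 1 ?_
  filter_upwards [ae_nn h] with x hx
  rw [Real.norm_eq_abs, abs_of_pos (Real.exp_pos _)]
  exact Real.exp_le_one_iff.2 (by nlinarith)

lemma LS_le_one {s : ℝ} (hs : 0 ≤ s) : LS F s ≤ 1 := by
  have : LS F s ≤ ∫ _x, (1 : ℝ) ∂F := by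
    refine integral_mono_ae (LS_integrable h hs) (integrable_const _) ?_
    filter_upwards [ae_nn h] with x hx
    exact Real.exp_le_one_iff.2 (by nlinarith)
  simpa using this

lemma LS_anti {s t : ℝ} (hs : 0 ≤ s) (hst : s ≤ t) : LS F t ≤ LS F s := by
  refine integral_mono_ae (LS_integrable h (hs.trans hst)) (LS_integrable h hs) ?_
  filter_upwards [ae_nn h] with x hx
  exact Real.exp_le_exp.2 (by nlinarith)

lemma one_sub_LS {s : ℝ} (hs : 0 ≤ s) : 1 - LS F s = ∫ x, (1 - Real.exp (-(s * x))) ∂F := by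
  rw [integral_sub (integrable_const _) (LS_integrable h hs)]; simp [LS]

/-- `F̂` is Lipschitz on `[0,∞)` with constant the mean of `F`. -/
lemma LS_lip {m : ℝ} (hi : Integrable (fun x => x) F) (hm : ∫ x, x ∂F = m)
    {s t : ℝ} (hs : 0 ≤ s) (ht : 0 ≤ t) : |LS F s - LS F t| ≤ m * |s - t| := by
  wlog hst : s ≤ t generalizing s t
  · rw [abs_sub_comm, abs_sub_comm s t]; exact this ht hs (le_of_not_ge hst)
  have h1 := LS_anti h hs hst
  rw [abs_of_nonneg (by linarith), abs_of_nonpos (by linarith), ← hm, ← integral_mul_const, LS, LS,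
    ← integral_sub (LS_integrable h hs) (LS_integrable h ht)]
  refine integral_mono_ae ((LS_integrable h hs).sub (LS_integrable h ht)) (hi.mul_const _) ?_
  filter_upwards [ae_nn h] with x hx
  have e : Real.exp (-(t * x)) = Real.exp (-(s * x)) * Real.exp (-((t - s) * x)) := by
    rw [← Real.exp_add]; ring_nf
  have e1 : Real.exp (-(s * x)) ≤ 1 := Real.exp_le_one_iff.2 (by nlinarith)
  have e2 := exp_taylor_lower ((t - s) * x)
  have e3 : Real.exp (-((t - s) * x)) ≤ 1 := Real.exp_le_one_iff.2 (by nlinarith)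
  have e4 := Real.exp_pos (-(s * x))
  simp only [e]
  nlinarith

lemma LS_lower {m : ℝ} (hi : Integrable (fun x => x) F) (hm : ∫ x, x ∂F = m)
    (s : ℝ) (hs : 0 ≤ s) : 1 - m * s ≤ LS F s := by
  have := LS_lip h hi hm hs le_rfl
  have h0 : LS F 0 = 1 := by simp [LS]
  rw [h0, sub_zero, abs_of_nonneg hs] at this
  linarith [abs_le.1 this]

lemma LS_upper {m C : ℝ} (hi : Integrable (fun x => x) F) (hm : ∫ x, x ∂F = m)
    (hi2 : Integrable (fun x => x ^ 2) F) (hC : ∫ x, x ^ 2 ∂F ≤ C)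
    (s : ℝ) (hs : 0 ≤ s) : LS F s ≤ 1 - m * s + C * s ^ 2 / 2 := by
  have hi1 : Integrable (fun x => 1 - s * x) F := (integrable_const _).sub (hi.const_mul _)
  have : LS F s ≤ ∫ x, (1 - s * x + s ^ 2 / 2 * x ^ 2) ∂F := by
    refine integral_mono_ae (LS_integrable h hs)
      (hi1.add (hi2.const_mul _)) ?_
    filter_upwards [ae_nn h] with x hx
    have := exp_taylor_upper (u := s * x) (by positivity)
    nlinarith
  rw [integral_add hi1 (hi2.const_mul _),
    integral_sub (integrable_const _) (hi.const_mul _), integral_const_mul, integral_const_mul,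
    hm] at this
  simp at this
  nlinarith [sq_nonneg s]

end LSbasics

lemma LS_measurable (F : Measure ℝ) [SFinite F] : Measurable (LS F) := by
  have : StronglyMeasurable (fun s => ∫ x, Real.exp (-(s * x)) ∂F) := by
    refine StronglyMeasurable.integral_prod_right (f := fun s x => Real.exp (-(s * x))) ?_
    exact Continuous.stronglyMeasurable (by fun_prop)
  exact this.measurable

/-- A probability measure on `[0,∞)` is determined by its Laplace transform; already the values
at the natural numbers suffice, by Weierstrass approximation in the variable `e^{-x}`. -/
lemma LS_unique {F H : Measure ℝ} [IsProbabilityMeasure F] [IsProbabilityMeasure H]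
    (hF : F (Set.Iio 0) = 0) (hH : H (Set.Iio 0) = 0)
    (h : ∀ s, 0 ≤ s → LS F s = LS H s) : F = H := by
  have hm : Measurable (fun x : ℝ => Real.exp (-x)) := by fun_prop
  have hpow : ∀ (K : Measure ℝ) [IsProbabilityMeasure K] (_ : K (Set.Iio 0) = 0) (n : ℕ),
      Integrable (fun x => Real.exp (-x) ^ n) K ∧ ∫ x, Real.exp (-x) ^ n ∂K = LS K n := by
    intro K _ hK n
    have e : (fun x : ℝ => Real.exp (-x) ^ n) = fun x => Real.exp (-(n * x)) := by
      ext x; rw [← Real.exp_nat_mul]; ring_nf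
    rw [e]; exact ⟨LS_integrable hK n.cast_nonneg, rfl⟩
  have hpi : ∀ (K : Measure ℝ) [IsProbabilityMeasure K] (_ : K (Set.Iio 0) = 0)
      (p : Polynomial ℝ), Integrable (fun x => p.eval (Real.exp (-x))) K := by
    intro K _ hK p
    simp only [Polynomial.eval_eq_sum_range]
    exact integrable_finsetSum _ fun i _ => ((hpow K hK i).1.const_mul _)
  have hpoly : ∀ p : Polynomial ℝ,
      ∫ x, p.eval (Real.exp (-x)) ∂F = ∫ x, p.eval (Real.exp (-x)) ∂H := by
    intro p
    simp only [Polynomial.eval_eq_sum_range]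
    rw [integral_finsetSum _ fun i _ => ((hpow F hF i).1.const_mul _),
      integral_finsetSum _ fun i _ => ((hpow H hH i).1.const_mul _)]
    refine Finset.sum_congr rfl fun i _ => ?_
    rw [integral_const_mul, integral_const_mul, (hpow F hF i).2, (hpow H hH i).2,
      h i i.cast_nonneg]
  have key : F.map (fun x => Real.exp (-x)) = H.map (fun x => Real.exp (-x)) := by
    have := Measure.isProbabilityMeasure_map (μ := F) hm.aemeasurable
    have := Measure.isProbabilityMeasure_map (μ := H) hm.aemeasurable
    refine ext_of_forall_integral_eq_of_IsFiniteMeasure fun f => ?_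
    rw [integral_map hm.aemeasurable f.continuous.aestronglyMeasurable,
      integral_map hm.aemeasurable f.continuous.aestronglyMeasurable]
    have hfi : ∀ (K : Measure ℝ) [IsProbabilityMeasure K],
        Integrable (fun x => f (Real.exp (-x))) K := fun K _ =>
      Integrable.of_bound (f.continuous.measurable.comp hm).aestronglyMeasurable ‖f‖
        (ae_of_all _ fun x => f.norm_coe_le_norm _)
    have hclose : ∀ (K : Measure ℝ) [IsProbabilityMeasure K] (_ : K (Set.Iio 0) = 0) (ε : ℝ)
        (p : Polynomial ℝ) (_ : ∀ x ∈ Set.Icc (0 : ℝ) 1, |p.eval x - f x| < ε),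
        |∫ x, p.eval (Real.exp (-x)) ∂K - ∫ x, f (Real.exp (-x)) ∂K| ≤ ε := by
      intro K _ hK ε p hp
      rw [← integral_sub (hpi K hK p) (hfi K)]
      have := norm_integral_le_of_norm_le_const (μ := K) (C := ε)
        (f := fun x => p.eval (Real.exp (-x)) - f (Real.exp (-x))) (by
          filter_upwards [ae_nn hK] with x hx
          exact (hp _ ⟨(Real.exp_pos _).le, Real.exp_le_one_iff.2 (by linarith)⟩).le)
      simpa using this
    refine eq_of_forall_dist_le fun ε hε => ?_
    obtain ⟨p, hp⟩ := exists_polynomial_near_of_continuousOn 0 1 f f.continuous.continuousOn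
      (ε / 2) (by positivity)
    have h1 := abs_le.1 (hclose F hF _ p hp)
    have h2 := abs_le.1 (hclose H hH _ p hp)
    rw [hpoly p] at h1
    rw [Real.dist_eq, abs_le]
    constructor <;> linarith
  have hg : Measurable (fun y : ℝ => -Real.log y) := by fun_prop
  have hid : ((fun y : ℝ => -Real.log y) ∘ fun x : ℝ => Real.exp (-x)) = id := by
    ext x; simp
  have h1 := congrArg (Measure.map (fun y : ℝ => -Real.log y)) key
  rwa [Measure.map_map hg hm, Measure.map_map hg hm, hid, Measure.map_id, Measure.map_id] at h1

/-- Markov's inequality for `1 - e^{-x/r}`, which is at least `1/2` where `x > r`: the bound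
`1 - μ s ≤ F̂(s)` controls the tails of `F`. -/
lemma tail_bound {F : Measure ℝ} [IsProbabilityMeasure F] (hF : F (Set.Iio 0) = 0) {μ : ℝ}
    (hl : ∀ s, 0 ≤ s → 1 - μ * s ≤ LS F s) {r : ℝ} (hr : 0 < r) :
    F {x | r < ‖x‖} ≤ ENNReal.ofReal (2 * μ / r) := by
  have hs : 0 ≤ r⁻¹ := by positivity
  have hint : Integrable (fun x => 1 - Real.exp (-(r⁻¹ * x))) F :=
    (integrable_const _).sub (LS_integrable hF hs)
  have h1 := mul_meas_ge_le_integral_of_nonneg (μ := F)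
    (f := fun x => 1 - Real.exp (-(r⁻¹ * x))) (by
      filter_upwards [ae_nn hF] with x hx
      simp only [Pi.zero_apply, sub_nonneg]
      exact Real.exp_le_one_iff.2 (by simp; positivity)) hint (1 / 2)
  rw [← one_sub_LS hF hs] at h1
  have h2 := hl _ hs
  have h3 : F {x | r < ‖x‖} ≤ F {x | 1 / 2 ≤ 1 - Real.exp (-(r⁻¹ * x))} := by
    refine measure_mono_ae ?_
    filter_upwards [ae_nn hF] with x hx (hrx : r < ‖x‖)
    change (1 : ℝ) / 2 ≤ 1 - Real.exp (-(r⁻¹ * x))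
    rw [Real.norm_of_nonneg hx] at hrx
    have : 1 ≤ r⁻¹ * x := by
      rw [inv_mul_eq_div, le_div_iff₀ hr]; linarith
    have h4 : Real.exp (-(r⁻¹ * x)) ≤ Real.exp (-1) := Real.exp_le_exp.2 (by linarith)
    have h5 : Real.exp (-1) ≤ 1 / 2 := by
      rw [Real.exp_neg, one_div]
      exact inv_anti₀ (by norm_num) (by have := Real.add_one_le_exp (1 : ℝ); linarith)
    linarith
  refine h3.trans ?_
  rw [← ENNReal.ofReal_toReal (measure_ne_top F {x | 1 / 2 ≤ 1 - Real.exp (-(r⁻¹ * x))})]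
  refine ENNReal.ofReal_le_ofReal ?_
  change 1 / 2 * F.real _ ≤ _ at h1
  change F.real _ ≤ _
  have h6 : 2 * μ / r = 2 * (μ * r⁻¹) := by rw [div_eq_mul_inv]; ring
  linarith

/-- Continuity theorem for Laplace transforms: the lower bound `1 - μ s` forces tightness, and
every weak cluster point has the limiting transform. -/
lemma LS_continuity {Fs : ℕ → Measure ℝ} [∀ n, IsProbabilityMeasure (Fs n)]
    (hF : ∀ n, Fs n (Set.Iio 0) = 0) {μ : ℝ}
    (hl : ∀ n s, 0 ≤ s → 1 - μ * s ≤ LS (Fs n) s) {φ : ℝ → ℝ}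
    (hφ : ∀ s, 0 ≤ s → Tendsto (fun n => LS (Fs n) s) atTop (𝓝 (φ s))) :
    ∃ F : Measure ℝ, IsProbabilityMeasure F ∧ F (Set.Iio 0) = 0 ∧
      ∀ s, 0 ≤ s → LS F s = φ s := by
  let P : ℕ → ProbabilityMeasure ℝ := fun n => ⟨Fs n, inferInstance⟩
  have ht : IsTightMeasureSet {((ν : ProbabilityMeasure ℝ) : Measure ℝ) | ν ∈ Set.range P} := by
    refine isTightMeasureSet_of_tendsto_measure_norm_gt ?_
    have hlim : Tendsto (fun r : ℝ => ENNReal.ofReal (2 * μ / r)) atTop (𝓝 0) := by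
      rw [← ENNReal.ofReal_zero]
      exact ENNReal.tendsto_ofReal (tendsto_const_nhds.div_atTop tendsto_id)
    refine tendsto_of_tendsto_of_tendsto_of_le_of_le' tendsto_const_nhds hlim
      (Eventually.of_forall fun _ => zero_le) ?_
    filter_upwards [eventually_gt_atTop 0] with r hr
    refine iSup₂_le ?_
    rintro _ ⟨_, ⟨n, rfl⟩, rfl⟩
    exact tail_bound (hF n) (hl n) hr
  have hc := isCompact_closure_of_isTightMeasureSet ht
  -- a limit along one free ultrafilter replaces the extraction of a convergent subsequence
  let U : Ultrafilter ℕ := hyperfilter ℕ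
  have hU : (U : Filter ℕ) ≤ atTop := Nat.hyperfilter_le_atTop
  obtain ⟨Q, -, hQ⟩ := isCompact_iff_ultrafilter_le_nhds'.1 hc (U.map P)
    (Ultrafilter.mem_map.2 (Filter.mem_of_superset Filter.univ_mem fun n _ => subset_closure ⟨n, rfl⟩))
  have hT : Tendsto P U (𝓝 Q) := hQ
  have h0 : (Q : Measure ℝ) (Set.Iio 0) = 0 := by
    have := ProbabilityMeasure.le_liminf_measure_open_of_tendsto hT (isOpen_Iio (a := (0 : ℝ)))
    have e : (fun n => (P n : Measure ℝ) (Set.Iio 0)) = fun _ => 0 := funext hF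
    rw [e, liminf_const] at this
    exact le_antisymm this zero_le
  refine ⟨Q, inferInstance, h0, fun s hs => ?_⟩
  let g : BoundedContinuousFunction ℝ ℝ := BoundedContinuousFunction.ofNormedAddCommGroup
    (fun x => Real.exp (-(s * max x 0))) (by fun_prop) 1 (by
      intro x
      rw [Real.norm_eq_abs, abs_of_pos (Real.exp_pos _)]
      exact Real.exp_le_one_iff.2 (by
        have := mul_nonneg hs (le_max_right x 0); linarith))
  have hg : ∀ (K : Measure ℝ), K (Set.Iio 0) = 0 → ∫ x, g x ∂K = LS K s := by
    intro K hK
    refine integral_congr_ae ?_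
    filter_upwards [ae_nn hK] with x hx
    simp [g, max_eq_left hx]
  have := (ProbabilityMeasure.tendsto_iff_forall_integral_tendsto.1 hT) g
  rw [hg _ h0] at this
  simp_rw [fun n => hg (P n : Measure ℝ) (hF n)] at this
  exact tendsto_nhds_unique this ((hφ s hs).mono_left hU)

/-! ### Moments from the behaviour of the transform at zero -/

/-- Fatou together with the upper bound `f n ≤ g`. -/
lemma tendsto_lintegral_of_le_limit {α : Type*} [MeasurableSpace α] {ν : Measure α}
    {f : ℕ → α → ℝ≥0∞} {g : α → ℝ≥0∞} (hf : ∀ n, Measurable (f n))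
    (hle : ∀ᶠ n in atTop, ∀ᵐ x ∂ν, f n x ≤ g x)
    (hlim : ∀ᵐ x ∂ν, Tendsto (fun n => f n x) atTop (𝓝 (g x))) :
    Tendsto (fun n => ∫⁻ x, f n x ∂ν) atTop (𝓝 (∫⁻ x, g x ∂ν)) := by
  refine tendsto_of_le_liminf_of_limsup_le ?_ ?_
  · calc ∫⁻ x, g x ∂ν = ∫⁻ x, liminf (fun n => f n x) atTop ∂ν :=
          lintegral_congr_ae (hlim.mono fun x hx => hx.liminf_eq.symm)
      _ ≤ _ := lintegral_liminf_le hf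
  · refine limsup_le_of_le (by isBoundedDefault) (hle.mono fun n hn => lintegral_mono_ae hn)

lemma kernel_one_tendsto {s : ℕ → ℝ} (hs : ∀ᶠ n in atTop, 0 < s n) (h0 : Tendsto s atTop (𝓝 0))
    {x : ℝ} (hx : 0 ≤ x) :
    Tendsto (fun n => (1 - Real.exp (-(s n * x))) / s n) atTop (𝓝 x) := by
  have hl : Tendsto (fun n => x - s n * x ^ 2 / 2) atTop (𝓝 x) := by
    have := (tendsto_const_nhds (x := x)).sub ((h0.mul_const (x ^ 2)).div_const 2)
    simpa using this
  refine tendsto_of_tendsto_of_tendsto_of_le_of_le' hl tendsto_const_nhds ?_ ?_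
  · filter_upwards [hs] with n hn
    rw [le_div_iff₀ hn]
    have := exp_taylor_upper (u := s n * x) (by positivity)
    nlinarith
  · filter_upwards [hs] with n hn
    rw [div_le_iff₀ hn]
    have := exp_taylor_lower (s n * x)
    nlinarith

/-- The lower bound comes from the Taylor polynomial of `exp` of degree two, whose error is at most
a multiple of `(s x)³` once `s x ≤ 1`. -/
lemma kernel_two_tendsto {s : ℕ → ℝ} (hs : ∀ᶠ n in atTop, 0 < s n) (h0 : Tendsto s atTop (𝓝 0))
    {x : ℝ} (hx : 0 ≤ x) :
    Tendsto (fun n => (Real.exp (-(s n * x)) - 1 + s n * x) / (s n ^ 2 / 2)) atTop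
      (𝓝 (x ^ 2)) := by
  have hl : Tendsto (fun n => x ^ 2 - s n * x ^ 3) atTop (𝓝 (x ^ 2)) := by
    have := (tendsto_const_nhds (x := x ^ 2)).sub (h0.mul_const (x ^ 3))
    simpa using this
  have h1 : ∀ᶠ n in atTop, s n * x ≤ 1 := by
    have : Tendsto (fun n => s n * x) atTop (𝓝 0) := by simpa using h0.mul_const x
    exact this.eventually_le_const one_pos
  refine tendsto_of_tendsto_of_tendsto_of_le_of_le' hl tendsto_const_nhds ?_ ?_
  · filter_upwards [hs, h1] with n hn hn1
    have hu : 0 ≤ s n * x := by positivity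
    rw [le_div_iff₀ (by positivity)]
    have hb := Real.exp_bound (x := -(s n * x)) (by rw [abs_neg, abs_of_nonneg hu]; exact hn1)
      (n := 3) (by norm_num)
    rw [abs_neg, abs_of_nonneg hu] at hb
    have hb := (abs_le.1 hb).1
    simp [Finset.sum_range_succ, Nat.factorial] at hb
    have : 0 ≤ (s n * x) ^ 3 := by positivity
    nlinarith
  · filter_upwards [hs] with n hn
    rw [div_le_iff₀ (by positivity)]
    have := exp_taylor_upper (u := s n * x) (by positivity)
    nlinarith

section limits
variable {F : Measure ℝ} [IsProbabilityMeasure F] (h : F (Set.Iio 0) = 0)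
  {s : ℕ → ℝ} (hs : ∀ᶠ n in atTop, 0 < s n) (h0 : Tendsto s atTop (𝓝 0))
include h hs h0

/-- The mean (possibly infinite) is the limit of the difference quotients of the transform
at `0`. -/
lemma LS_first_order :
    Tendsto (fun n => ENNReal.ofReal ((1 - LS F (s n)) / s n)) atTop
      (𝓝 (∫⁻ x, ENNReal.ofReal x ∂F)) := by
  have := tendsto_lintegral_of_le_limit (ν := F)
    (f := fun n x => ENNReal.ofReal ((1 - Real.exp (-(s n * x))) / s n))
    (g := fun x => ENNReal.ofReal x) (fun n => by fun_prop) (by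
      filter_upwards [hs] with n hn
      filter_upwards [ae_nn h] with x hx
      refine ENNReal.ofReal_le_ofReal ?_
      rw [div_le_iff₀ hn]
      have := exp_taylor_lower (s n * x)
      nlinarith) (by
      filter_upwards [ae_nn h] with x hx
      exact ENNReal.tendsto_ofReal (kernel_one_tendsto hs h0 hx))
  refine this.congr' ?_
  filter_upwards [hs] with n hn
  rw [one_sub_LS h hn.le, ← integral_div, ofReal_integral_eq_lintegral_ofReal]
  · exact ((integrable_const _).sub (LS_integrable h hn.le)).div_const _
  · filter_upwards [ae_nn h] with x hx
    refine div_nonneg (sub_nonneg.2 (Real.exp_le_one_iff.2 ?_)) hn.le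
    have := mul_nonneg hn.le hx
    linarith

/-- The second moment (possibly infinite) is the limit of the second-order difference quotients
of the transform at `0`. -/
lemma LS_second_order {m : ℝ} (hi : Integrable (fun x => x) F) (hm : ∫ x, x ∂F = m) :
    Tendsto (fun n => ENNReal.ofReal ((LS F (s n) - 1 + m * s n) / (s n ^ 2 / 2))) atTop
      (𝓝 (∫⁻ x, ENNReal.ofReal (x ^ 2) ∂F)) := by
  have := tendsto_lintegral_of_le_limit (ν := F)
    (f := fun n x => ENNReal.ofReal ((Real.exp (-(s n * x)) - 1 + s n * x) / (s n ^ 2 / 2)))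
    (g := fun x => ENNReal.ofReal (x ^ 2)) (fun n => by fun_prop) (by
      filter_upwards [hs] with n hn
      filter_upwards [ae_nn h] with x hx
      refine ENNReal.ofReal_le_ofReal ?_
      rw [div_le_iff₀ (by positivity)]
      have := exp_taylor_upper (u := s n * x) (by positivity)
      nlinarith) (by
      filter_upwards [ae_nn h] with x hx
      exact ENNReal.tendsto_ofReal (kernel_two_tendsto hs h0 hx))
  refine this.congr' ?_
  filter_upwards [hs] with n hn
  have i1 : Integrable (fun x => Real.exp (-(s n * x)) - 1) F :=
    (LS_integrable h hn.le).sub (integrable_const _)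
  have e : (LS F (s n) - 1 + m * s n) = ∫ x, (Real.exp (-(s n * x)) - 1 + s n * x) ∂F := by
    rw [integral_add i1 (hi.const_mul _),
      integral_sub (LS_integrable h hn.le) (integrable_const _), integral_const_mul, hm]
    simp [LS, mul_comm]
  rw [e, ← integral_div, ofReal_integral_eq_lintegral_ofReal]
  · exact (i1.add (hi.const_mul _)).div_const _
  · exact ae_of_all _ fun x => div_nonneg (exp_taylor_lower _) (by positivity)

end limits

lemma seq_pos : ∀ᶠ n : ℕ in atTop, (0 : ℝ) < 1 / ((n : ℝ) + 1) :=
  Eventually.of_forall fun _ => Nat.one_div_pos_of_nat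

lemma integrable_of_lintegral {F : Measure ℝ} (h : F (Set.Iio 0) = 0)
    (hfin : ∫⁻ x, ENNReal.ofReal x ∂F ≠ ⊤) :
    Integrable (fun x => x) F := by
  refine ⟨measurable_id.aestronglyMeasurable, ?_⟩
  rw [hasFiniteIntegral_iff_ofReal (ae_nn h)]
  exact hfin.lt_top

lemma integral_of_lintegral {F : Measure ℝ} (h : F (Set.Iio 0) = 0) :
    ∫ x, x ∂F = (∫⁻ x, ENNReal.ofReal x ∂F).toReal :=
  integral_eq_lintegral_of_nonneg_ae (ae_nn h) measurable_id.aestronglyMeasurable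

lemma integrable_sq_of_lintegral {F : Measure ℝ}
    (hfin : ∫⁻ x, ENNReal.ofReal (x ^ 2) ∂F ≠ ⊤) :
    Integrable (fun x => x ^ 2) F := by
  refine ⟨by fun_prop, ?_⟩
  rw [hasFiniteIntegral_iff_ofReal (ae_of_all _ fun x => sq_nonneg x)]
  exact hfin.lt_top

lemma integral_sq_of_lintegral (F : Measure ℝ) :
    ∫ x, x ^ 2 ∂F = (∫⁻ x, ENNReal.ofReal (x ^ 2) ∂F).toReal :=
  integral_eq_lintegral_of_nonneg_ae (ae_of_all _ fun x => sq_nonneg x) (by fun_prop)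

lemma integrable_of_sq {F : Measure ℝ} [IsProbabilityMeasure F]
    (hi : Integrable (fun x => x ^ 2) F) : Integrable (fun x => x) F := by
  refine ((integrable_const (1 : ℝ)).add hi).mono' measurable_id.aestronglyMeasurable
    (ae_of_all _ fun x => ?_)
  simp only [Pi.add_apply, Real.norm_eq_abs]
  nlinarith [sq_nonneg (|x| - 1), sq_abs x, abs_nonneg x]

/-- `F` has mean `μ` and second moment at most `C`, expressed through its Laplace transform only,
so that the condition is stable under pointwise limits. -/
def MomBd (F : Measure ℝ) (μ C : ℝ) : Prop :=
  ∀ s, 0 ≤ s → 1 - μ * s ≤ LS F s ∧ LS F s ≤ 1 - μ * s + C * s ^ 2 / 2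

lemma MomBd.moments {F : Measure ℝ} [IsProbabilityMeasure F] (h : F (Set.Iio 0) = 0) {μ C : ℝ}
    (hμ : 0 ≤ μ) (hb : MomBd F μ C) :
    ∫ x, x ∂F = μ ∧ Integrable (fun x => x ^ 2) F := by
  have h0 := tendsto_one_div_add_atTop_nhds_zero_nat (𝕜 := ℝ)
  have t1 := LS_first_order h seq_pos h0
  have t1' : Tendsto (fun n : ℕ => (1 - LS F (1 / ((n : ℝ) + 1))) / (1 / ((n : ℝ) + 1))) atTop
      (𝓝 μ) := by
    have hl : Tendsto (fun n : ℕ => μ - C / 2 * (1 / ((n : ℝ) + 1))) atTop (𝓝 μ) := by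
      simpa using (tendsto_const_nhds (x := μ)).sub (h0.const_mul (C / 2))
    refine tendsto_of_tendsto_of_tendsto_of_le_of_le' hl tendsto_const_nhds ?_ ?_
    · filter_upwards [seq_pos] with n hn
      rw [le_div_iff₀ hn]
      have := (hb _ hn.le).2
      nlinarith
    · filter_upwards [seq_pos] with n hn
      rw [div_le_iff₀ hn]
      have := (hb _ hn.le).1
      linarith
  have e1 := tendsto_nhds_unique t1 (ENNReal.tendsto_ofReal t1')
  have hi := integrable_of_lintegral h (by rw [e1]; exact ENNReal.ofReal_ne_top)
  have hm : ∫ x, x ∂F = μ := by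
    rw [integral_of_lintegral h, e1, ENNReal.toReal_ofReal hμ]
  have t2 := LS_second_order h seq_pos h0 hi hm
  have e2 : ∫⁻ x, ENNReal.ofReal (x ^ 2) ∂F ≤ ENNReal.ofReal C := by
    refine le_of_tendsto t2 ?_
    filter_upwards [seq_pos] with n hn
    refine ENNReal.ofReal_le_ofReal ?_
    rw [div_le_iff₀ (by positivity)]
    have := (hb _ hn.le).2
    linarith
  exact ⟨hm, integrable_sq_of_lintegral (ne_top_of_le_ne_top ENNReal.ofReal_ne_top e2)⟩

lemma momBd_of_moments {F : Measure ℝ} [IsProbabilityMeasure F] (h : F (Set.Iio 0) = 0) {μ C : ℝ}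
    (hm : ∫ x, x ∂F = μ) (hi2 : Integrable (fun x => x ^ 2) F) (hC : ∫ x, x ^ 2 ∂F ≤ C) :
    MomBd F μ C := fun s hs =>
  ⟨LS_lower h (integrable_of_sq hi2) hm s hs, LS_upper h (integrable_of_sq hi2) hm hi2 hC s hs⟩

/-! ### The map `σ` and the moment identities -/

/-- The integrand of `σ`. -/
noncomputable def sigI (F : Measure ℝ) (μ s t : ℝ) : ℝ :=
  if t = 0 then μ * s else (1 - LS F (t * s)) / t

lemma sigI_measurable (F : Measure ℝ) [SFinite F] (μ s : ℝ) : Measurable (sigI F μ s) := by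
  unfold sigI
  refine Measurable.ite (measurableSet_singleton 0) measurable_const ?_
  exact (measurable_const.sub ((LS_measurable F).comp (by fun_prop))).div measurable_id

lemma sigI_le {F : Measure ℝ} {μ s t : ℝ} (hl : ∀ s, 0 ≤ s → 1 - μ * s ≤ LS F s)
    (hs : 0 ≤ s) (ht : 0 ≤ t) : sigI F μ s t ≤ μ * s := by
  unfold sigI
  split_ifs with h
  · rfl
  · have ht' : 0 < t := lt_of_le_of_ne ht (Ne.symm h)
    rw [div_le_iff₀ ht']
    have := hl (t * s) (by positivity)
    linarith

lemma sigI_nonneg {F : Measure ℝ} [IsProbabilityMeasure F] (hF : F (Set.Iio 0) = 0) {μ s t : ℝ}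
    (hμ : 0 ≤ μ) (hs : 0 ≤ s) (ht : 0 ≤ t) : 0 ≤ sigI F μ s t := by
  unfold sigI
  split_ifs with h
  · positivity
  · have := LS_le_one hF (mul_nonneg ht hs)
    exact div_nonneg (by linarith) ht

lemma sigI_ge {F : Measure ℝ} {μ C s t : ℝ} (hb : MomBd F μ C)
    (hs : 0 ≤ s) (ht : 0 ≤ t) : μ * s - C * s ^ 2 / 2 * t ≤ sigI F μ s t := by
  unfold sigI
  split_ifs with h
  · simp [h]
  · have ht' : 0 < t := lt_of_le_of_ne ht (Ne.symm h)
    rw [le_div_iff₀ ht']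
    have := (hb (t * s) (by positivity)).2
    nlinarith

section sig
variable {F FT : Measure ℝ} [IsProbabilityMeasure F] [IsProbabilityMeasure FT]
  (hF : F (Set.Iio 0) = 0) (hT : FT (Set.Iio 0) = 0) {μ : ℝ} (hμ : 0 ≤ μ)
  (hl : ∀ s, 0 ≤ s → 1 - μ * s ≤ LS F s)

lemma sigmaT_eq (F FT : Measure ℝ) (μ s : ℝ) : sigmaT F FT μ s = ∫ t, sigI F μ s t ∂FT := rfl

include hF hT hμ hl in
lemma sigI_integrable {s : ℝ} (hs : 0 ≤ s) : Integrable (sigI F μ s) FT := by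
  refine Integrable.of_bound (sigI_measurable F μ s).aestronglyMeasurable (μ * s) ?_
  filter_upwards [ae_nn hT] with t ht
  rw [Real.norm_of_nonneg (sigI_nonneg hF hμ hs ht)]
  exact sigI_le hl hs ht

omit [IsProbabilityMeasure FT] in
include hF hT hμ in
lemma sigmaT_nonneg {s : ℝ} (hs : 0 ≤ s) : 0 ≤ sigmaT F FT μ s :=
  integral_nonneg_of_ae ((ae_nn hT).mono fun _ ht => sigI_nonneg hF hμ hs ht)

include hF hT hμ hl in
lemma sigmaT_le {s : ℝ} (hs : 0 ≤ s) : sigmaT F FT μ s ≤ μ * s := by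
  have : sigmaT F FT μ s ≤ ∫ _t, μ * s ∂FT :=
    integral_mono_ae (sigI_integrable hF hT hμ hl hs) (integrable_const _)
      ((ae_nn hT).mono fun _ ht => sigI_le hl hs ht)
  simpa using this

include hF hT hμ in
lemma sigmaT_ge {C : ℝ} (hb : MomBd F μ C) (hiT : Integrable (fun t => t) FT)
    {s : ℝ} (hs : 0 ≤ s) : μ * s - C * (∫ t, t ∂FT) * s ^ 2 / 2 ≤ sigmaT F FT μ s := by
  have : ∫ t, (μ * s - C * s ^ 2 / 2 * t) ∂FT ≤ sigmaT F FT μ s :=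
    integral_mono_ae ((integrable_const _).sub (hiT.const_mul _))
      (sigI_integrable hF hT hμ (fun s hs => (hb s hs).1) hs)
      ((ae_nn hT).mono fun _ ht => sigI_ge hb hs ht)
  rw [integral_sub (integrable_const _) (hiT.const_mul _),
    integral_const_mul (C * s ^ 2 / 2)] at this
  simp at this
  linarith

include hF hT hμ hl in
/-- `σ` contracts the metric `sup_s |F̂(s) - Ĥ(s)| / s²` by the factor `E[T]`. -/
lemma sigmaT_contr {H : Measure ℝ} [IsProbabilityMeasure H] (hH : H (Set.Iio 0) = 0)
    (hlH : ∀ s, 0 ≤ s → 1 - μ * s ≤ LS H s) (hiT : Integrable (fun t => t) FT)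
    {D : ℝ} (hD : ∀ s, 0 ≤ s → |LS F s - LS H s| ≤ D * s ^ 2) {s : ℝ} (hs : 0 ≤ s) :
    |sigmaT F FT μ s - sigmaT H FT μ s| ≤ (∫ t, t ∂FT) * D * s ^ 2 := by
  have i1 := sigI_integrable hF hT hμ hl hs
  have i2 := sigI_integrable hH hT hμ hlH hs
  rw [sigmaT_eq, sigmaT_eq, ← integral_sub i1 i2, mul_assoc, ← integral_mul_const]
  refine abs_integral_le_integral_abs.trans
    (integral_mono_ae (i1.sub i2).abs (hiT.mul_const _) ?_)
  filter_upwards [ae_nn hT] with t ht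
  simp only [sigI]
  split_ifs with h
  · simp [h]
  · have ht' : 0 < t := lt_of_le_of_ne ht (Ne.symm h)
    rw [← sub_div, abs_div, abs_of_pos ht', div_le_iff₀ ht']
    have := hD (t * s) (by positivity)
    rw [abs_sub_comm] at this
    calc _ = |LS H (t * s) - LS F (t * s)| := by congr 1; ring
      _ ≤ _ := this
      _ = _ := by ring

variable {s : ℕ → ℝ} (hs : ∀ᶠ n in atTop, 0 < s n) (h0 : Tendsto s atTop (𝓝 0))

omit [IsProbabilityMeasure F] in
include hs h0 in
lemma first_order_of_momBd {C : ℝ} (hb : MomBd F μ C) :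
    Tendsto (fun n => (1 - LS F (s n)) / s n) atTop (𝓝 μ) := by
  have hl : Tendsto (fun n => μ - C / 2 * s n) atTop (𝓝 μ) := by
    simpa using (tendsto_const_nhds (x := μ)).sub (h0.const_mul (C / 2))
  refine tendsto_of_tendsto_of_tendsto_of_le_of_le' hl tendsto_const_nhds ?_ ?_
  · filter_upwards [hs] with n hn
    rw [le_div_iff₀ hn]
    have := (hb _ hn.le).2
    nlinarith
  · filter_upwards [hs] with n hn
    rw [div_le_iff₀ hn]
    have := (hb _ hn.le).1
    linarith

include hF hT hμ hs h0 in
lemma sigmaT_first_order {C : ℝ} (hb : MomBd F μ C) :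
    Tendsto (fun n => sigmaT F FT μ (s n) / s n) atTop (𝓝 μ) := by
  have : Tendsto (fun n => ∫ t, sigI F μ (s n) t / s n ∂FT) atTop (𝓝 (∫ _t, μ ∂FT)) := by
    refine tendsto_integral_filter_of_dominated_convergence (fun _ => μ)
      (Eventually.of_forall fun n => ((sigI_measurable F μ (s n)).div_const _).aestronglyMeasurable)
      ?_ (integrable_const _) ?_
    · filter_upwards [hs] with n hn
      filter_upwards [ae_nn hT] with t ht
      rw [Real.norm_of_nonneg (div_nonneg (sigI_nonneg hF hμ hn.le ht) hn.le), div_le_iff₀ hn]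
      exact sigI_le (fun s hs => (hb s hs).1) hn.le ht
    · filter_upwards [ae_nn hT] with t ht
      rcases ht.eq_or_lt with rfl | ht
      · refine tendsto_const_nhds.congr' ?_
        filter_upwards [hs] with n hn
        simp [sigI, hn.ne']
      · have := first_order_of_momBd (F := F) (s := fun n => t * s n)
          (hs.mono fun n hn => mul_pos ht hn) (by simpa using h0.const_mul t) hb
        refine this.congr' ?_
        filter_upwards [hs] with n hn
        simp [sigI, ht.ne', div_div]
  simp only [integral_div] at this
  simpa [sigmaT_eq] using this

include hF hT hμ hs h0 in
/-- `σ(s) = μ s - E[T] E[X²] s²/2 + o(s²)`, also when `E[T] = ∞`. -/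
lemma sigmaT_second_order (hi2 : Integrable (fun x => x ^ 2) F) (hm : ∫ x, x ∂F = μ) :
    Tendsto (fun n => ENNReal.ofReal ((μ * s n - sigmaT F FT μ (s n)) / (s n ^ 2 / 2))) atTop
      (𝓝 ((∫⁻ t, ENNReal.ofReal t ∂FT) * ∫⁻ x, ENNReal.ofReal (x ^ 2) ∂F)) := by
  have hb := momBd_of_moments hF hm hi2 le_rfl
  rw [← lintegral_mul_const _ (by fun_prop)]
  have hm2 : ∫⁻ x, ENNReal.ofReal (x ^ 2) ∂F = ENNReal.ofReal (∫ x, x ^ 2 ∂F) :=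
    (ofReal_integral_eq_lintegral_ofReal hi2 (ae_of_all _ fun x => sq_nonneg x)).symm
  have := tendsto_lintegral_of_le_limit (ν := FT)
    (f := fun n t => ENNReal.ofReal ((μ * s n - sigI F μ (s n) t) / (s n ^ 2 / 2)))
    (g := fun t => ENNReal.ofReal t * ∫⁻ x, ENNReal.ofReal (x ^ 2) ∂F)
    (fun n => ((measurable_const.sub (sigI_measurable F μ (s n))).div_const _).ennreal_ofReal) (by
      filter_upwards [hs] with n hn
      filter_upwards [ae_nn hT] with t ht
      rw [hm2, ← ENNReal.ofReal_mul ht]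
      refine ENNReal.ofReal_le_ofReal ?_
      rw [div_le_iff₀ (by positivity)]
      have := sigI_ge hb hn.le ht
      linarith) (by
      filter_upwards [ae_nn hT] with t ht
      rcases ht.eq_or_lt with rfl | ht
      · simp [sigI]
      · have := LS_second_order hF (s := fun n => t * s n)
          (hs.mono fun n hn => mul_pos ht hn) (by simpa using h0.const_mul t)
          (integrable_of_sq hi2) hm
        refine (ENNReal.Tendsto.const_mul this (Or.inr ENNReal.ofReal_ne_top)).congr' ?_
        filter_upwards [hs] with n hn
        rw [← ENNReal.ofReal_mul ht.le]
        congr 1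
        simp only [sigI, ht.ne', if_false]
        field_simp
        ring)
  refine this.congr' ?_
  filter_upwards [hs] with n hn
  have i1 := sigI_integrable hF hT hμ (fun s hs => (hb s hs).1) hn.le
  have e : μ * s n - sigmaT F FT μ (s n) = ∫ t, (μ * s n - sigI F μ (s n) t) ∂FT := by
    rw [integral_sub (integrable_const _) i1]
    simp [sigmaT_eq]
  rw [e, ← integral_div, ofReal_integral_eq_lintegral_ofReal]
  · exact ((integrable_const _).sub i1).div_const _
  · filter_upwards [ae_nn hT] with t ht
    have := sigI_le (fun s hs => (hb s hs).1) hn.le ht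
    exact div_nonneg (by linarith) (by positivity)

end sig

/-- Moment identities forced by the equation `F̂ = Ĝ ∘ σ`: the distribution `G` has mean one, and
the second moments satisfy `E[X²] = E[G²] μ² + E[T] E[X²]` in `[0,∞]`. Both come from comparing
the expansions of the two sides at `0`. -/
lemma moment_identities {F FT G : Measure ℝ} [IsProbabilityMeasure F] [IsProbabilityMeasure FT]
    [IsProbabilityMeasure G] (hF : F (Set.Iio 0) = 0) (hT : FT (Set.Iio 0) = 0)
    (hG : G (Set.Iio 0) = 0) {μ : ℝ} (hμ : 0 < μ)
    (hi2 : Integrable (fun x => x ^ 2) F) (hm : ∫ x, x ∂F = μ)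
    (heq : ∀ s, 0 ≤ s → LS F s = LS G (sigmaT F FT μ s)) :
    ∫⁻ x, ENNReal.ofReal x ∂G = 1 ∧
    ∫⁻ x, ENNReal.ofReal (x ^ 2) ∂F =
      (∫⁻ x, ENNReal.ofReal (x ^ 2) ∂G) * ENNReal.ofReal (μ ^ 2) +
        (∫⁻ t, ENNReal.ofReal t ∂FT) * ∫⁻ x, ENNReal.ofReal (x ^ 2) ∂F := by
  have hb := momBd_of_moments hF hm hi2 le_rfl
  obtain ⟨s, hs, h0⟩ : ∃ s : ℕ → ℝ, (∀ᶠ n in atTop, 0 < s n) ∧ Tendsto s atTop (𝓝 0) :=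
    ⟨_, seq_pos, tendsto_one_div_add_atTop_nhds_zero_nat (𝕜 := ℝ)⟩
  set u : ℕ → ℝ := fun n => sigmaT F FT μ (s n) with hu
  have r : Tendsto (fun n => u n / s n) atTop (𝓝 μ) := sigmaT_first_order hF hT hμ.le hs h0 hb
  have up : ∀ᶠ n in atTop, 0 < u n := by
    filter_upwards [r.eventually_const_lt hμ, hs] with n h1 h2
    exact (div_pos_iff_of_pos_right h2).1 h1
  have u0 : Tendsto u atTop (𝓝 0) := by
    have := r.mul h0
    rw [mul_zero] at this
    refine this.congr' ?_
    filter_upwards [hs] with n hn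
    exact div_mul_cancel₀ _ hn.ne'
  have a1 := LS_first_order hG up u0
  have a2 : Tendsto (fun n => (1 - LS G (u n)) / u n) atTop (𝓝 1) := by
    have := (first_order_of_momBd hs h0 hb).div r hμ.ne'
    rw [div_self hμ.ne'] at this
    refine this.congr' ?_
    filter_upwards [hs, up] with n hn hun
    simp only [Pi.div_apply]
    rw [heq _ hn.le]
    change (1 - LS G (u n)) / s n / (u n / s n) = _
    field_simp
  have e1 : ∫⁻ x, ENNReal.ofReal x ∂G = 1 := by
    rw [tendsto_nhds_unique a1 (ENNReal.tendsto_ofReal a2), ENNReal.ofReal_one]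
  refine ⟨e1, ?_⟩
  have hiG := integrable_of_lintegral hG (by rw [e1]; exact ENNReal.one_ne_top)
  have hmG : ∫ x, x ∂G = 1 := by rw [integral_of_lintegral hG, e1, ENNReal.toReal_one]
  have b1 := LS_second_order hF hs h0 (integrable_of_sq hi2) hm
  have b2 := LS_second_order hG up u0 hiG hmG
  have b3 := sigmaT_second_order hF hT hμ.le hs h0 hi2 hm
  have b4 : Tendsto (fun n => ENNReal.ofReal ((u n / s n) ^ 2)) atTop
      (𝓝 (ENNReal.ofReal (μ ^ 2))) := ENNReal.tendsto_ofReal (r.pow 2)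
  -- with `u = σ(s)`: `F̂(s) - 1 + μ s = (Ĝ(u) - 1 + u) + (μ s - u)`; divide by `s² / 2`
  have b5 := (ENNReal.Tendsto.mul b2 (Or.inr ENNReal.ofReal_ne_top) b4
    (Or.inl (by simpa using hμ.ne'))).add b3
  refine tendsto_nhds_unique b1 (b5.congr' ?_)
  filter_upwards [hs, up] with n hn hun
  have c1 := LS_lower hG hiG hmG _ hun.le
  have c2 := sigmaT_le hF hT hμ.le (fun s hs => (hb s hs).1) hn.le
  rw [← ENNReal.ofReal_mul (div_nonneg (by linarith) (by positivity)),
    ← ENNReal.ofReal_add (mul_nonneg (div_nonneg (by linarith) (by positivity)) (sq_nonneg _))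
      (div_nonneg (by linarith) (by positivity)), heq _ hn.le]
  congr 1
  have : sigmaT F FT μ (s n) = u n := rfl
  rw [this]
  field_simp
  ring

/-! ### Compound Poisson mixtures and one iteration step -/

lemma lintegral_LS {F : Measure ℝ} [IsProbabilityMeasure F] (h : F (Set.Iio 0) = 0) {s : ℝ}
    (hs : 0 ≤ s) : ∫⁻ x, ENNReal.ofReal (Real.exp (-(s * x))) ∂F = ENNReal.ofReal (LS F s) :=
  (ofReal_integral_eq_lintegral_ofReal (LS_integrable h hs)
    (ae_of_all _ fun _ => (Real.exp_pos _).le)).symm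

lemma LS_nonneg (F : Measure ℝ) (s : ℝ) : 0 ≤ LS F s :=
  integral_nonneg fun _ => (Real.exp_pos _).le

lemma LS_of_lintegral {F : Measure ℝ} [IsProbabilityMeasure F] (h : F (Set.Iio 0) = 0) {s v : ℝ}
    (hs : 0 ≤ s) (hv : 0 ≤ v)
    (e : ∫⁻ x, ENNReal.ofReal (Real.exp (-(s * x))) ∂F = ENNReal.ofReal v) : LS F s = v := by
  rw [lintegral_LS h hs] at e
  rwa [ENNReal.ofReal_eq_ofReal_iff (LS_nonneg F s) hv] at e

/-- The `n`-fold convolution power of `K`. -/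
noncomputable def convPow (K : Measure ℝ) : ℕ → Measure ℝ
  | 0 => Measure.dirac 0
  | n + 1 => K.conv (convPow K n)

lemma convPow_prob (K : Measure ℝ) [IsProbabilityMeasure K] (n : ℕ) :
    IsProbabilityMeasure (convPow K n) := by
  induction n with
  | zero => unfold convPow; infer_instance
  | succ n ih => unfold convPow; infer_instance

lemma convPow_nn {K : Measure ℝ} [IsProbabilityMeasure K] (hK : K (Set.Iio 0) = 0) (n : ℕ) :
    convPow K n (Set.Iio 0) = 0 := by
  induction n with
  | zero => simp [convPow]
  | succ n ih =>
    have := convPow_prob K n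
    have h : ∀ᵐ x ∂(K.conv (convPow K n)), 0 ≤ x := by
      rw [Measure.conv, ae_map_iff (by fun_prop) measurableSet_Ici]
      have h1 : ∀ᵐ p ∂(K.prod (convPow K n)), 0 ≤ p.1 :=
        Measure.quasiMeasurePreserving_fst.ae (ae_nn hK)
      have h2 : ∀ᵐ p ∂(K.prod (convPow K n)), 0 ≤ p.2 :=
        Measure.quasiMeasurePreserving_snd.ae (ae_nn ih)
      filter_upwards [h1, h2] with p h1 h2 using add_nonneg h1 h2
    rw [ae_iff] at h
    unfold convPow
    convert h using 2; ext x; simp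

lemma convPow_lintegral (K : Measure ℝ) [IsProbabilityMeasure K] (s : ℝ) (n : ℕ) :
    ∫⁻ x, ENNReal.ofReal (Real.exp (-(s * x))) ∂(convPow K n) =
      (∫⁻ x, ENNReal.ofReal (Real.exp (-(s * x))) ∂K) ^ n := by
  induction n with
  | zero => simp [convPow]
  | succ n ih =>
    have := convPow_prob K n
    unfold convPow
    rw [Measure.lintegral_conv (by fun_prop), pow_succ', ← ih, ← lintegral_mul_const _ (by fun_prop)]
    refine lintegral_congr fun x => ?_
    rw [← lintegral_const_mul _ (by fun_prop)]
    refine lintegral_congr fun y => ?_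
    rw [← ENNReal.ofReal_mul (Real.exp_pos _).le, ← Real.exp_add]
    ring_nf

/-- `Ĝ(c (1 - K̂(s)))` is the transform of a compound Poisson distribution whose Poisson
parameter is `c` times a random variable with distribution `G`. -/
lemma compound_poisson {G K : Measure ℝ} [IsProbabilityMeasure G] [IsProbabilityMeasure K]
    (hG : G (Set.Iio 0) = 0) (hK : K (Set.Iio 0) = 0) {c : ℝ} (hc : 0 ≤ c) :
    ∃ H : Measure ℝ, IsProbabilityMeasure H ∧ H (Set.Iio 0) = 0 ∧
      ∀ s, 0 ≤ s → LS H s = LS G (c * (1 - LS K s)) := by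
  -- `w n g` is the Poisson weight of `n` at parameter `c g`; `p n` is its average over `G`
  let w : ℕ → ℝ → ℝ := fun n g => Real.exp (-(c * g)) * ((c * g) ^ n / n.factorial)
  let p : ℕ → ℝ≥0∞ := fun n => ∫⁻ g, ENNReal.ofReal (w n g) ∂G
  have hgen : ∀ v : ℝ, 0 ≤ v → ∑' n, p n * ENNReal.ofReal v ^ n =
      ∫⁻ g, ENNReal.ofReal (Real.exp (-(c * (1 - v) * g))) ∂G := by
    intro v hv
    have : ∀ n, p n * ENNReal.ofReal v ^ n =
        ∫⁻ g, ENNReal.ofReal (w n g) * ENNReal.ofReal v ^ n ∂G := fun n =>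
      (lintegral_mul_const _ (by fun_prop)).symm
    simp_rw [this]
    rw [← lintegral_tsum (fun n => by fun_prop)]
    refine lintegral_congr_ae ?_
    filter_upwards [ae_nn hG] with g hg
    have e : ∀ n, ENNReal.ofReal (w n g) * ENNReal.ofReal v ^ n =
        ENNReal.ofReal (Real.exp (-(c * g)) * ((c * g * v) ^ n / n.factorial)) := by
      intro n
      rw [← ENNReal.ofReal_pow hv, ← ENNReal.ofReal_mul (by positivity)]
      congr 1
      simp only [w, mul_pow]
      ring
    simp_rw [e]
    have hsum := (NormedSpace.expSeries_div_hasSum_exp (c * g * v)).mul_left (Real.exp (-(c * g)))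
    rw [← ENNReal.ofReal_tsum_of_nonneg (fun n => by positivity) hsum.summable, hsum.tsum_eq,
      ← Real.exp_eq_exp_ℝ, ← Real.exp_add]
    ring_nf
  let H := Measure.sum fun n => p n • convPow K n
  have hH1 : IsProbabilityMeasure H := by
    constructor
    have h1 := hgen 1 zero_le_one
    simp only [ENNReal.ofReal_one, one_pow, mul_one, sub_self, mul_zero, zero_mul, neg_zero,
      Real.exp_zero, lintegral_const, measure_univ] at h1
    simp only [H, Measure.sum_apply _ MeasurableSet.univ, Measure.smul_apply, smul_eq_mul]
    rw [← h1]
    refine tsum_congr fun n => ?_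
    have := convPow_prob K n
    simp
  have hH0 : H (Set.Iio 0) = 0 := by
    simp [H, Measure.sum_apply _ measurableSet_Iio, convPow_nn hK]
  refine ⟨H, hH1, hH0, fun s hs => ?_⟩
  refine LS_of_lintegral hH0 hs (LS_nonneg _ _) ?_
  have hv := LS_nonneg K s
  have hv1 := LS_le_one hK hs
  rw [← lintegral_LS hG (mul_nonneg hc (by linarith)), ← hgen _ hv, lintegral_sum_measure]
  refine tsum_congr fun n => ?_
  rw [lintegral_smul_measure, convPow_lintegral, lintegral_LS hK hs, smul_eq_mul]

/-- When `T` is bounded away from `0`, `σ` is the Laplace exponent `c (1 - K̂)` of a compound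
Poisson process. -/
lemma sigmaT_compound {F FT : Measure ℝ} [IsProbabilityMeasure F] [IsProbabilityMeasure FT]
    (hF : F (Set.Iio 0) = 0) {ε : ℝ} (hε : 0 < ε) (hT : ∀ᵐ t ∂FT, ε ≤ t) (μ : ℝ) :
    ∃ (c : ℝ) (K : Measure ℝ), 0 ≤ c ∧ IsProbabilityMeasure K ∧ K (Set.Iio 0) = 0 ∧
      ∀ s, 0 ≤ s → sigmaT F FT μ s = c * (1 - LS K s) := by
  have hinv : Integrable (fun t : ℝ => t⁻¹) FT := by
    refine Integrable.of_bound (by fun_prop) ε⁻¹ ?_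
    filter_upwards [hT] with t ht
    have ht0 : 0 < t := hε.trans_le ht
    rw [Real.norm_of_nonneg (by positivity)]
    exact inv_anti₀ hε ht
  -- `c = E[1/T]`, and `K` is the law of `T₁ X` with `T₁` having density `1/(c t)` relative to `FT`
  set c := ∫ t, t⁻¹ ∂FT with hc
  have hinn : 0 ≤ᵐ[FT] fun t : ℝ => t⁻¹ := by
    filter_upwards [hT] with t ht
    exact inv_nonneg.2 (hε.le.trans ht)
  have hcpos : 0 < c := by
    rw [hc, integral_pos_iff_support_of_nonneg_ae hinn hinv]
    have : Function.support (fun t : ℝ => t⁻¹) =ᵐ[FT] (Set.univ : Set ℝ) := by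
      filter_upwards [hT] with t ht
      refine propext ⟨fun _ => trivial, fun _ => ?_⟩
      exact inv_ne_zero (hε.trans_le ht).ne'
    rw [measure_congr this]
    simp
  let FT' := FT.withDensity fun t => ENNReal.ofReal (c⁻¹ * t⁻¹)
  have hFT' : IsProbabilityMeasure FT' := by
    constructor
    rw [withDensity_apply _ MeasurableSet.univ, Measure.restrict_univ,
      ← ofReal_integral_eq_lintegral_ofReal (hinv.const_mul _)
        (hinn.mono fun t ht => mul_nonneg (by positivity) ht), integral_const_mul, ← hc,
      inv_mul_cancel₀ hcpos.ne', ENNReal.ofReal_one]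
  have hT' : ∀ᵐ t ∂FT', ε ≤ t := (withDensity_absolutelyContinuous _ _).ae_le hT
  have hmul : Measurable fun q : ℝ × ℝ => q.1 * q.2 := by fun_prop
  let K := (FT'.prod F).map fun q => q.1 * q.2
  have hKp : IsProbabilityMeasure K := Measure.isProbabilityMeasure_map hmul.aemeasurable
  have hK0 : K (Set.Iio 0) = 0 := by
    have h : ∀ᵐ x ∂K, 0 ≤ x := by
      rw [ae_map_iff hmul.aemeasurable measurableSet_Ici]
      have h1 : ∀ᵐ q ∂(FT'.prod F), ε ≤ q.1 := Measure.quasiMeasurePreserving_fst.ae hT'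
      have h2 : ∀ᵐ q ∂(FT'.prod F), 0 ≤ q.2 := Measure.quasiMeasurePreserving_snd.ae (ae_nn hF)
      filter_upwards [h1, h2] with q h1 h2 using mul_nonneg (hε.le.trans h1) h2
    rw [ae_iff] at h
    convert h using 2; ext x; simp
  refine ⟨c, K, hcpos.le, hKp, hK0, fun s hs => ?_⟩
  have hb : ∀ t, 0 ≤ t → ‖LS F (t * s) * t⁻¹‖ ≤ ‖t⁻¹‖ := by
    intro t ht
    have h1 := LS_nonneg F (t * s)
    have h2 := LS_le_one hF (mul_nonneg ht hs)
    rw [norm_mul, Real.norm_of_nonneg h1]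
    exact mul_le_of_le_one_left (norm_nonneg _) h2
  have hi1 : Integrable (fun t => LS F (t * s) * t⁻¹) FT := by
    refine hinv.mono (((LS_measurable F).comp (measurable_id.mul_const s)).mul
      measurable_inv).aestronglyMeasurable ?_
    filter_upwards [hT] with t ht using hb t (hε.le.trans ht)
  have e1 : sigmaT F FT μ s = c - ∫ t, LS F (t * s) * t⁻¹ ∂FT := by
    rw [hc, ← integral_sub hinv hi1]
    refine integral_congr_ae ?_
    filter_upwards [hT] with t ht
    rw [if_neg (hε.trans_le ht).ne']
    ring
  have e2 : LS K s = c⁻¹ * ∫ t, LS F (t * s) * t⁻¹ ∂FT := by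
    refine LS_of_lintegral hK0 hs ?_ ?_
    · refine mul_nonneg (by positivity) (integral_nonneg_of_ae ?_)
      filter_upwards [hinn] with t ht using mul_nonneg (LS_nonneg _ _) ht
    rw [← integral_const_mul, lintegral_map (by fun_prop) hmul, lintegral_prod _ (by fun_prop),
      lintegral_withDensity_eq_lintegral_mul _ (by fun_prop) (by fun_prop),
      ofReal_integral_eq_lintegral_ofReal (hi1.const_mul _)]
    · refine lintegral_congr_ae ?_
      filter_upwards [hT] with t ht
      have ht0 : 0 < t := hε.trans_le ht
      have : ∀ x, -(s * (t * x)) = -(t * s * x) := fun x => by ring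
      simp only [Pi.mul_apply, this]
      rw [lintegral_LS hF (by positivity), ← ENNReal.ofReal_mul (by positivity)]
      congr 1
      ring
    · filter_upwards [hinn] with t ht
      exact mul_nonneg (by positivity) (mul_nonneg (LS_nonneg _ _) ht)
  rw [e1, e2, mul_sub, mul_one, mul_inv_cancel_left₀ hcpos.ne']

/-- Truncating `T` from below does not change `σ` in the limit. -/
lemma sigmaT_trunc {F FT : Measure ℝ} [IsProbabilityMeasure F] [IsProbabilityMeasure FT]
    (hF : F (Set.Iio 0) = 0) (hT : FT (Set.Iio 0) = 0) {μ C : ℝ} (hμ : 0 ≤ μ)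
    (hb : MomBd F μ C) {s : ℝ} (hs : 0 ≤ s) {e : ℕ → ℝ} (he : ∀ n, 0 < e n)
    (he0 : Tendsto e atTop (𝓝 0)) :
    Tendsto (fun n => sigmaT F (FT.map fun t => max t (e n)) μ s) atTop
      (𝓝 (sigmaT F FT μ s)) := by
  have e1 : ∀ n, sigmaT F (FT.map fun t => max t (e n)) μ s =
      ∫ t, sigI F μ s (max t (e n)) ∂FT := fun n => by
    rw [sigmaT_eq, integral_map (by fun_prop) (sigI_measurable F μ s).aestronglyMeasurable]
  simp_rw [e1, sigmaT_eq]
  refine tendsto_integral_of_dominated_convergence (fun _ => μ * s)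
    (fun n => ((sigI_measurable F μ s).comp (by fun_prop)).aestronglyMeasurable)
    (integrable_const _) (fun n => ?_) ?_
  · refine ae_of_all _ fun t => ?_
    have h : 0 ≤ max t (e n) := (he n).le.trans (le_max_right _ _)
    rw [Real.norm_of_nonneg (sigI_nonneg hF hμ hs h)]
    exact sigI_le (fun s hs => (hb s hs).1) hs h
  · filter_upwards [ae_nn hT] with t ht
    rcases ht.eq_or_lt with rfl | ht
    · have h1 : ∀ n, max 0 (e n) = e n := fun n => max_eq_right (he n).le
      simp_rw [h1, sigI, if_true, (he _).ne', if_false]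
      rcases hs.eq_or_lt with rfl | hs
      · simp [LS]
      · have := (first_order_of_momBd (F := F) (s := fun n => e n * s)
          (Eventually.of_forall fun n => mul_pos (he n) hs)
          (by simpa using he0.mul_const s) hb).mul_const s
        refine this.congr fun n => ?_
        have := (he n).ne'
        field_simp
    · refine tendsto_const_nhds.congr' ?_
      filter_upwards [he0.eventually_lt_const ht] with n hn
      rw [max_eq_left hn.le]

/-- One step of the fixed-point iteration: `Ĝ ∘ σ_F` is again the transform of a probability
distribution on `[0,∞)`. -/
lemma step_exists {F FT G : Measure ℝ} [IsProbabilityMeasure F] [IsProbabilityMeasure FT]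
    [IsProbabilityMeasure G] (hF : F (Set.Iio 0) = 0) (hT : FT (Set.Iio 0) = 0)
    (hG : G (Set.Iio 0) = 0) {μ C : ℝ} (hμ : 0 ≤ μ) (hb : MomBd F μ C)
    (hiG : Integrable (fun x => x) G) (hmG : ∫ x, x ∂G = 1) :
    ∃ H : Measure ℝ, IsProbabilityMeasure H ∧ H (Set.Iio 0) = 0 ∧
      ∀ s, 0 ≤ s → LS H s = LS G (sigmaT F FT μ s) := by
  let e : ℕ → ℝ := fun n => 1 / ((n : ℝ) + 1)
  have he : ∀ n, 0 < e n := fun _ => Nat.one_div_pos_of_nat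
  have he0 : Tendsto e atTop (𝓝 0) := tendsto_one_div_add_atTop_nhds_zero_nat
  let FTn : ℕ → Measure ℝ := fun n => FT.map fun t => max t (e n)
  have hp : ∀ n, IsProbabilityMeasure (FTn n) := fun n =>
    Measure.isProbabilityMeasure_map (by fun_prop)
  have hae : ∀ n, ∀ᵐ t ∂(FTn n), e n ≤ t := fun n => by
    rw [ae_map_iff (by fun_prop) measurableSet_Ici]
    exact ae_of_all _ fun t => le_max_right _ _
  have hnn : ∀ n, FTn n (Set.Iio 0) = 0 := fun n => by
    have h : ∀ᵐ t ∂(FTn n), 0 ≤ t := (hae n).mono fun t ht => (he n).le.trans ht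
    rw [ae_iff] at h
    convert h using 2; ext x; simp
  have hex : ∀ n, ∃ H : Measure ℝ, IsProbabilityMeasure H ∧ H (Set.Iio 0) = 0 ∧
      ∀ s, 0 ≤ s → LS H s = LS G (sigmaT F (FTn n) μ s) := by
    intro n
    obtain ⟨c, K, hc, hK, hK0, hcK⟩ := sigmaT_compound hF (he n) (hae n) μ
    obtain ⟨H, h1, h2, h3⟩ := compound_poisson hG hK0 hc
    exact ⟨H, h1, h2, fun s hs => by rw [h3 s hs, hcK s hs]⟩
  choose Hn h1 h2 h3 using hex
  have hl : ∀ s, 0 ≤ s → 1 - μ * s ≤ LS F s := fun s hs => (hb s hs).1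
  refine LS_continuity (Fs := Hn) h2 (μ := μ) (fun n s hs => ?_)
    (φ := fun s => LS G (sigmaT F FT μ s)) (fun s hs => ?_)
  · rw [h3 n s hs]
    have := LS_lower hG hiG hmG _ (sigmaT_nonneg hF (hnn n) hμ hs)
    have := sigmaT_le hF (hnn n) hμ hl hs
    linarith
  · rw [tendsto_iff_dist_tendsto_zero]
    have ht := tendsto_iff_dist_tendsto_zero.1 (sigmaT_trunc hF hT hμ hb hs he he0)
    refine squeeze_zero (fun _ => dist_nonneg) (fun n => ?_) ht
    rw [h3 n s hs, Real.dist_eq, Real.dist_eq]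
    have := LS_lip hG hiG hmG (sigmaT_nonneg hF (hnn n) hμ hs) (sigmaT_nonneg hF hT hμ hs)
    rwa [one_mul] at this

/-! ### The fixed point of `F̂ = Ĝ ∘ σ` -/

section fixedpoint
variable {FT G : Measure ℝ} [IsProbabilityMeasure FT] [IsProbabilityMeasure G]
  (hT : FT (Set.Iio 0) = 0) (hG : G (Set.Iio 0) = 0) {μ : ℝ} (hμ : 0 < μ)
  (hiT : Integrable (fun t => t) FT)
  (hiG : Integrable (fun x => x) G) (hmG : ∫ x, x ∂G = 1)

include hT hG hμ hiT hiG hmG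

/-- `F ↦ Ĝ ∘ σ_F` contracts the metric `sup_s |F̂(s) - Ĥ(s)| / s²` by the factor `E[T]`, because
`Ĝ` is Lipschitz with constant `E[G] = 1`. -/
lemma contr_step {F H : Measure ℝ} [IsProbabilityMeasure F] [IsProbabilityMeasure H]
    (hF : F (Set.Iio 0) = 0) (hH : H (Set.Iio 0) = 0) {C : ℝ}
    (hbF : MomBd F μ C) (hbH : MomBd H μ C) {D : ℝ}
    (hD : ∀ s, 0 ≤ s → |LS F s - LS H s| ≤ D * s ^ 2) {s : ℝ} (hs : 0 ≤ s) :
    |LS G (sigmaT F FT μ s) - LS G (sigmaT H FT μ s)| ≤ (∫ t, t ∂FT) * D * s ^ 2 := by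
  have := LS_lip hG hiG hmG (sigmaT_nonneg hF hT hμ.le hs) (sigmaT_nonneg hH hT hμ.le hs)
  rw [one_mul] at this
  exact this.trans (sigmaT_contr hF hT hμ.le (fun s hs => (hbF s hs).1) hH
    (fun s hs => (hbH s hs).1) hiT hD hs)

omit hT hG hμ hiT hiG hmG [IsProbabilityMeasure FT] [IsProbabilityMeasure G] in
lemma momBd_diff {F H : Measure ℝ} {C : ℝ} (hbF : MomBd F μ C) (hbH : MomBd H μ C)
    (s : ℝ) (hs : 0 ≤ s) : |LS F s - LS H s| ≤ C / 2 * s ^ 2 := by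
  have h1 := hbF s hs
  have h2 := hbH s hs
  rw [abs_le]
  constructor <;> linarith

lemma fixed_unique (hT1 : ∫ t, t ∂FT < 1) {F H : Measure ℝ} [IsProbabilityMeasure F]
    [IsProbabilityMeasure H] (hF : F (Set.Iio 0) = 0) (hH : H (Set.Iio 0) = 0) {C : ℝ}
    (hbF : MomBd F μ C) (hbH : MomBd H μ C)
    (eF : ∀ s, 0 ≤ s → LS F s = LS G (sigmaT F FT μ s))
    (eH : ∀ s, 0 ≤ s → LS H s = LS G (sigmaT H FT μ s)) : F = H := by
  have hρ : 0 ≤ ∫ t, t ∂FT := integral_nonneg_of_ae (ae_nn hT)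
  have key : ∀ n : ℕ, ∀ s, 0 ≤ s →
      |LS F s - LS H s| ≤ (∫ t, t ∂FT) ^ n * (C / 2) * s ^ 2 := by
    intro n
    induction n with
    | zero => simpa using momBd_diff hbF hbH
    | succ n ih =>
      intro s hs
      rw [eF s hs, eH s hs, pow_succ', mul_assoc (∫ t, t ∂FT)]
      exact contr_step hT hG hμ hiT hiG hmG hF hH hbF hbH ih hs
  refine LS_unique hF hH fun s hs => ?_
  have hlim : Tendsto (fun n : ℕ => (∫ t, t ∂FT) ^ n * (C / 2) * s ^ 2) atTop (𝓝 0) := by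
    simpa using ((tendsto_pow_atTop_nhds_zero_of_lt_one hρ hT1).mul_const (C / 2)).mul_const (s ^ 2)
  have := ge_of_tendsto' hlim fun n => key n s hs
  exact sub_eq_zero.1 (abs_eq_zero.1 (le_antisymm this (abs_nonneg _)))

lemma fixed_exists (hT1 : ∫ t, t ∂FT < 1) (hi2G : Integrable (fun x => x ^ 2) G) :
    ∃ F : Measure ℝ, IsProbabilityMeasure F ∧ F (Set.Iio 0) = 0 ∧ (∫ x, x ∂F) = μ ∧
      Integrable (fun x => x ^ 2) F ∧ ∀ s, 0 ≤ s → LS F s = LS G (sigmaT F FT μ s) := by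
  set ρ := ∫ t, t ∂FT with hρdef
  set M := ∫ x, x ^ 2 ∂G with hM
  have hρ : 0 ≤ ρ := integral_nonneg_of_ae (ae_nn hT)
  have hM0 : 0 ≤ M := integral_nonneg fun x => sq_nonneg x
  -- `C` is chosen so that both `μ² ≤ C` (for the starting point) and `ρ C + M μ² ≤ C`
  -- (invariance of the bound under the iteration) hold.
  obtain ⟨C, hC1, hC2⟩ : ∃ C : ℝ, μ ^ 2 ≤ C ∧ C * ρ + M * μ ^ 2 ≤ C := by
    refine ⟨(M + 1) * μ ^ 2 / (1 - ρ), ?_, ?_⟩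
    · rw [le_div_iff₀ (by linarith)]
      nlinarith [sq_nonneg μ, mul_nonneg hM0 (sq_nonneg μ), mul_nonneg hρ (sq_nonneg μ)]
    · have : (M + 1) * μ ^ 2 / (1 - ρ) * (1 - ρ) = (M + 1) * μ ^ 2 :=
        div_mul_cancel₀ _ (by linarith)
      nlinarith [sq_nonneg μ]
  let S := {F : Measure ℝ // IsProbabilityMeasure F ∧ F (Set.Iio 0) = 0 ∧ MomBd F μ C}
  have hstep : ∀ F : S, ∃ H : S, ∀ s, 0 ≤ s → LS H.1 s = LS G (sigmaT F.1 FT μ s) := by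
    rintro ⟨F, hFp, hF, hb⟩
    obtain ⟨H, h1, h2, h3⟩ := step_exists hF hT hG hμ.le hb hiG hmG
    refine ⟨⟨H, h1, h2, fun s hs => ?_⟩, h3⟩
    rw [h3 s hs]
    have hl : ∀ s, 0 ≤ s → 1 - μ * s ≤ LS F s := fun s hs => (hb s hs).1
    have a0 := sigmaT_nonneg (μ := μ) hF hT hμ.le hs
    have a1 := sigmaT_le hF hT hμ.le hl hs
    have a2 := sigmaT_ge hF hT hμ.le hb hiT hs
    have b1 := LS_lower hG hiG hmG _ a0
    have b2 := LS_upper hG hiG hmG hi2G le_rfl _ a0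
    rw [← hρdef] at a2
    rw [← hM] at b2
    have c1 : sigmaT F FT μ s ^ 2 ≤ (μ * s) ^ 2 := pow_le_pow_left₀ a0 a1 2
    refine ⟨by linarith, ?_⟩
    have c2 := mul_le_mul_of_nonneg_left c1 hM0
    have c3 := mul_le_mul_of_nonneg_right hC2 (sq_nonneg s)
    nlinarith
  choose Φ hΦ using hstep
  let F0 : S := ⟨Measure.dirac μ, inferInstance, by simp [hμ.le], fun s hs => by
    have h1 := exp_taylor_lower (s * μ)
    have h2 := exp_taylor_upper (u := s * μ) (by positivity)
    have e : LS (Measure.dirac μ) s = Real.exp (-(s * μ)) := by simp [LS]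
    rw [e]
    have := mul_le_mul_of_nonneg_right hC1 (sq_nonneg s)
    constructor <;> nlinarith⟩
  let Fn : ℕ → S := fun n => Φ^[n] F0
  have hFn : ∀ n s, 0 ≤ s → LS (Fn (n + 1)).1 s = LS G (sigmaT (Fn n).1 FT μ s) := by
    intro n s hs
    have : Fn (n + 1) = Φ (Fn n) := Function.iterate_succ_apply' _ _ _
    rw [this]
    exact hΦ _ s hs
  have hp : ∀ n, IsProbabilityMeasure (Fn n).1 := fun n => (Fn n).2.1
  have h0 : ∀ n, (Fn n).1 (Set.Iio 0) = 0 := fun n => (Fn n).2.2.1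
  have hb : ∀ n, MomBd (Fn n).1 μ C := fun n => (Fn n).2.2.2
  have hgeo : ∀ n : ℕ, ∀ s, 0 ≤ s →
      |LS (Fn n).1 s - LS (Fn (n + 1)).1 s| ≤ ρ ^ n * (C / 2) * s ^ 2 := by
    intro n
    induction n with
    | zero => simpa using momBd_diff (hb 0) (hb 1)
    | succ n ih =>
      intro s hs
      rw [hFn _ s hs, hFn _ s hs, pow_succ', mul_assoc ρ]
      exact contr_step hT hG hμ hiT hiG hmG (h0 _) (h0 _) (hb _) (hb _) ih hs
  have hgeo' : ∀ s, 0 ≤ s → ∀ n,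
      dist (LS (Fn n).1 s) (LS (Fn (n + 1)).1 s) ≤ (C / 2 * s ^ 2) * ρ ^ n := fun s hs n => by
    rw [Real.dist_eq]; exact (hgeo n s hs).trans_eq (by ring)
  have hlim : ∀ s, ∃ l, 0 ≤ s → Tendsto (fun n => LS (Fn n).1 s) atTop (𝓝 l) := by
    intro s
    by_cases hs : 0 ≤ s
    · obtain ⟨l, hl⟩ := cauchySeq_tendsto_of_complete
        (cauchySeq_of_le_geometric ρ _ hT1 (hgeo' s hs))
      exact ⟨l, fun _ => hl⟩
    · exact ⟨0, fun h => absurd h hs⟩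
  choose φ hφ using hlim
  obtain ⟨F, hFp, hF0, hFφ⟩ := LS_continuity (Fs := fun n => (Fn n).1) h0
    (fun n s hs => (hb n s hs).1) hφ
  have hFlim : ∀ s, 0 ≤ s → Tendsto (fun n => LS (Fn n).1 s) atTop (𝓝 (LS F s)) := by
    intro s hs; rw [hFφ s hs]; exact hφ s hs
  have hbF : MomBd F μ C := fun s hs =>
    ⟨ge_of_tendsto' (hFlim s hs) fun n => (hb n s hs).1,
      le_of_tendsto' (hFlim s hs) fun n => (hb n s hs).2⟩
  obtain ⟨m1, m2⟩ := hbF.moments hF0 hμ.le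
  refine ⟨F, hFp, hF0, m1, m2, fun s hs => ?_⟩
  have hd : ∀ n s, 0 ≤ s → |LS (Fn n).1 s - LS F s| ≤ (C / 2 * ρ ^ n / (1 - ρ)) * s ^ 2 := by
    intro n s hs
    have := dist_le_of_le_geometric_of_tendsto ρ _ hT1 (hgeo' s hs) (hFlim s hs) n
    rw [Real.dist_eq] at this
    exact this.trans_eq (by ring)
  have hG' : Tendsto (fun n => LS (Fn (n + 1)).1 s) atTop (𝓝 (LS G (sigmaT F FT μ s))) := by
    rw [tendsto_iff_dist_tendsto_zero]
    have hz : Tendsto (fun n : ℕ => ρ * (C / 2 * ρ ^ n / (1 - ρ)) * s ^ 2) atTop (𝓝 0) := by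
      have := (((tendsto_pow_atTop_nhds_zero_of_lt_one hρ hT1).const_mul (C / 2)).div_const
        (1 - ρ)).const_mul ρ |>.mul_const (s ^ 2)
      simpa using this
    refine squeeze_zero (fun _ => dist_nonneg) (fun n => ?_) hz
    rw [Real.dist_eq, hFn n s hs]
    exact contr_step hT hG hμ hiT hiG hmG (h0 n) hF0 (hb n) hbF (hd n) hs
  exact tendsto_nhds_unique ((hFlim s hs).comp (tendsto_add_atTop_nat 1)) hG'

end fixedpoint

/-! ### The zeta distribution and the mixing law `G` -/

/-- `log (n + 1)`; the shift makes `n : ℕ` enumerate the positive integers. -/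
noncomputable def logN (n : ℕ) : ℝ := Real.log ((n : ℝ) + 1)

lemma logN_nonneg (n : ℕ) : 0 ≤ logN n :=
  Real.log_nonneg (by have : (0 : ℝ) ≤ n := n.cast_nonneg; linarith)

lemma rpow_eq_exp_logN (s : ℝ) (n : ℕ) : ((n : ℝ) + 1) ^ (-s) = Real.exp (-s * logN n) := by
  rw [Real.rpow_def_of_pos (by positivity), logN, mul_comm]

lemma exp_logN_integrable {s : ℝ} (hs : 1 < s) :
    Integrable (fun n => Real.exp (-s * logN n)) Measure.count := by
  rw [integrable_count_iff]
  have h := (Real.summable_nat_rpow (p := -s)).2 (by linarith)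
  have h' := (summable_nat_add_iff 1).2 h
  refine Summable.congr h'.abs fun n => ?_
  rw [← rpow_eq_exp_logN]
  push_cast
  rw [Real.norm_eq_abs]

lemma mem_interior_logN {t : ℝ} (ht : t < -1) :
    t ∈ interior (ProbabilityTheory.integrableExpSet logN Measure.count) := by
  refine mem_interior.2 ⟨Set.Iio (-1), fun u hu => ?_, isOpen_Iio, ht⟩
  have := exp_logN_integrable (s := -u) (by have : u < -1 := hu; linarith)
  simpa [ProbabilityTheory.integrableExpSet] using this

lemma pow_logN_integrable {s : ℝ} (hs : 1 < s) (k : ℕ) :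
    Integrable (fun n => logN n ^ k * Real.exp (-s * logN n)) Measure.count :=
  ProbabilityTheory.integrable_pow_mul_exp_of_mem_interior_integrableExpSet
    (mem_interior_logN (by linarith)) k

lemma zetaR_eq {s : ℝ} (hs : 1 < s) :
    zetaR s = ∫ n, Real.exp (-s * logN n) ∂Measure.count := by
  rw [integral_countable (exp_logN_integrable hs)]
  simp [zetaR, rpow_eq_exp_logN]

/-- On `(1, ∞)` each `s ↦ ∑ (log n)ᵏ n⁻ˢ` has derivative `-∑ (log n)ᵏ⁺¹ n⁻ˢ`: the sums are the
derivatives of the moment generating function of `logN` under counting measure. -/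
lemma hasDerivAt_zetaSum {s : ℝ} (hs : 1 < s) (k : ℕ) :
    HasDerivAt (fun s => ∫ n, logN n ^ k * Real.exp (-s * logN n) ∂Measure.count)
      (-∫ n, logN n ^ (k + 1) * Real.exp (-s * logN n) ∂Measure.count) s := by
  have h := ProbabilityTheory.hasDerivAt_integral_pow_mul_exp_real
    (mem_interior_logN (t := -s) (by linarith)) k
  simpa [Function.comp_def] using HasDerivAt.comp s h (hasDerivAt_neg s)

lemma zetaR_deriv {s : ℝ} (hs : 1 < s) :
    deriv zetaR s = -∫ n, logN n * Real.exp (-s * logN n) ∂Measure.count := by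
  have h := hasDerivAt_zetaSum hs 0
  simp only [pow_zero, one_mul, zero_add, pow_one] at h
  refine (h.congr_of_eventuallyEq ?_).deriv
  filter_upwards [Ioi_mem_nhds hs] with u hu using zetaR_eq hu

lemma zetaR_deriv2 {s : ℝ} (hs : 1 < s) :
    deriv (deriv zetaR) s = ∫ n, logN n ^ 2 * Real.exp (-s * logN n) ∂Measure.count := by
  have h := (hasDerivAt_zetaSum hs 1).neg
  simp only [pow_one, neg_neg, one_add_one_eq_two] at h
  refine (h.congr_of_eventuallyEq ?_).deriv
  filter_upwards [Ioi_mem_nhds hs] with u hu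
  simpa using zetaR_deriv hu

lemma integral_logN_pos {s : ℝ} (hs : 1 < s) (k : ℕ) :
    0 < ∫ n, logN n ^ k * Real.exp (-s * logN n) ∂Measure.count := by
  have hnn : ∀ n, 0 ≤ logN n ^ k * Real.exp (-s * logN n) := fun n =>
    mul_nonneg (pow_nonneg (logN_nonneg n) k) (Real.exp_pos _).le
  rw [integral_countable (pow_logN_integrable hs k)]
  have hsum : Summable fun n => logN n ^ k * Real.exp (-s * logN n) :=
    Summable.of_norm (integrable_count_iff.1 (pow_logN_integrable hs k))
  have h1 : 0 < logN 1 := Real.log_pos (by norm_num)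
  simpa using hsum.tsum_pos hnn 1 (mul_pos (pow_pos h1 k) (Real.exp_pos _))

lemma zetaR_pos {s : ℝ} (hs : 1 < s) : 0 < zetaR s := by
  simpa [zetaR_eq hs] using integral_logN_pos hs 0

lemma zetaR_deriv_neg {s : ℝ} (hs : 1 < s) : deriv zetaR s < 0 := by
  simpa [zetaR_deriv hs] using integral_logN_pos hs 1

lemma zetaR_deriv2_pos {s : ℝ} (hs : 1 < s) : 0 < deriv (deriv zetaR) s := by
  simpa [zetaR_deriv2 hs] using integral_logN_pos hs 2

/-- The zeta distribution with parameter `a`, transported to `ℕ` by `n ↦ n + 1`: the point `n`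
has mass `(n + 1)⁻ᵃ / ζ(a)`. -/
noncomputable def zetaDist (a : ℝ) : Measure ℕ :=
  Measure.count.withDensity fun n => ENNReal.ofReal (Real.exp (-a * logN n) / zetaR a)

lemma zetaDist_lintegral (a : ℝ) (f : ℕ → ℝ≥0∞) :
    ∫⁻ n, f n ∂zetaDist a =
      ∫⁻ n, ENNReal.ofReal (Real.exp (-a * logN n) / zetaR a) * f n ∂Measure.count := by
  rw [zetaDist, lintegral_withDensity_eq_lintegral_mul _ (by fun_prop) (by fun_prop)]
  rfl

lemma zetaDist_lintegral_exp {a u : ℝ} (ha : 1 < a) (hu : 0 ≤ u) :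
    ∫⁻ n, ENNReal.ofReal (Real.exp (-(u * logN n))) ∂zetaDist a =
      ENNReal.ofReal (zetaR (a + u) / zetaR a) := by
  have hz := zetaR_pos ha
  rw [zetaDist_lintegral, zetaR_eq (s := a + u) (by linarith), ← integral_div,
    ofReal_integral_eq_lintegral_ofReal ((exp_logN_integrable (by linarith)).div_const _)
      (ae_of_all _ fun n => by positivity)]
  refine lintegral_congr fun n => ?_
  rw [← ENNReal.ofReal_mul (by positivity), div_mul_eq_mul_div, ← Real.exp_add]
  ring_nf

lemma zetaDist_lintegral_pow {a : ℝ} (ha : 1 < a) (k : ℕ) :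
    ∫⁻ n, ENNReal.ofReal (logN n ^ k) ∂zetaDist a =
      ENNReal.ofReal ((∫ n, logN n ^ k * Real.exp (-a * logN n) ∂Measure.count) / zetaR a) := by
  have hz := zetaR_pos ha
  rw [zetaDist_lintegral, ← integral_div,
    ofReal_integral_eq_lintegral_ofReal ((pow_logN_integrable ha k).div_const _)
      (ae_of_all _ fun n => by have := logN_nonneg n; positivity)]
  refine lintegral_congr fun n => ?_
  rw [← ENNReal.ofReal_mul (by positivity)]
  ring_nf

lemma zetaDist_prob {a : ℝ} (ha : 1 < a) : IsProbabilityMeasure (zetaDist a) := by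
  have h := zetaDist_lintegral_exp ha le_rfl
  rw [add_zero, div_self (zetaR_pos ha).ne'] at h
  exact ⟨by simpa using h⟩

/-- The law of `Λ · log N` with `Λ` of law `FL` and an independent zeta-distributed `N`. -/
noncomputable def zetaMix (FL : Measure ℝ) (a : ℝ) : Measure ℝ :=
  (FL.prod (zetaDist a)).map fun q => q.1 * logN q.2

section
variable {FL : Measure ℝ} (hL : FL (Set.Iio 0) = 0) {a : ℝ}
  (ha : 1 < a)

lemma mulLogN_measurable : Measurable fun q : ℝ × ℕ => q.1 * logN q.2 :=
  measurable_fst.mul ((measurable_of_countable logN).comp measurable_snd)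

include ha in
lemma zetaMix_prob [IsProbabilityMeasure FL] : IsProbabilityMeasure (zetaMix FL a) := by
  have := zetaDist_prob ha
  exact Measure.isProbabilityMeasure_map mulLogN_measurable.aemeasurable

include ha in
lemma zetaMix_lintegral {f : ℝ → ℝ≥0∞} (hf : Measurable f) :
    ∫⁻ x, f x ∂zetaMix FL a = ∫⁻ l, ∫⁻ n, f (l * logN n) ∂zetaDist a ∂FL := by
  have := zetaDist_prob ha
  rw [zetaMix, lintegral_map hf mulLogN_measurable]
  exact lintegral_prod _ (hf.comp mulLogN_measurable).aemeasurable

include hL ha in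
lemma zetaMix_Iio : zetaMix FL a (Set.Iio 0) = 0 := by
  rw [← lintegral_indicator_one measurableSet_Iio,
    zetaMix_lintegral ha (measurable_one.indicator measurableSet_Iio)]
  refine (lintegral_congr_ae ?_).trans lintegral_zero
  filter_upwards [ae_nn hL] with l hl
  refine (lintegral_congr fun n => ?_).trans lintegral_zero
  have := mul_nonneg hl (logN_nonneg n)
  simp [this]

include hL ha in
lemma zetaMix_LS {u : ℝ} (hu : 0 ≤ u) :
    LS (zetaMix FL a) u = 1 / zetaR a * ∫ l, zetaR (a + l * u) ∂FL := by
  have := zetaDist_prob ha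
  have hz := zetaR_pos ha
  have hval : ∀ l, 0 ≤ l →
      ∫⁻ n, ENNReal.ofReal (Real.exp (-(u * (l * logN n)))) ∂zetaDist a =
        ENNReal.ofReal (zetaR (a + l * u) / zetaR a) := fun l hl => by
    rw [← zetaDist_lintegral_exp ha (mul_nonneg hl hu)]
    refine lintegral_congr fun n => ?_
    ring_nf
  have hmeas : Measurable fun l : ℝ =>
      ∫⁻ n, ENNReal.ofReal (Real.exp (-(u * (l * logN n)))) ∂zetaDist a :=
    Measurable.lintegral_prod_right'
      (f := fun q : ℝ × ℕ => ENNReal.ofReal (Real.exp (-(u * (q.1 * logN q.2)))))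
      (((mulLogN_measurable.const_mul u).neg.exp).ennreal_ofReal)
  rw [LS, integral_eq_lintegral_of_nonneg_ae (ae_of_all _ fun _ => (Real.exp_pos _).le)
    (by fun_prop), zetaMix_lintegral ha (by fun_prop), ← integral_toReal hmeas.aemeasurable,
    ← integral_const_mul]
  · refine integral_congr_ae ?_
    filter_upwards [ae_nn hL] with l hl
    have h2 := (zetaR_pos (s := a + l * u) (by nlinarith)).le
    simp only [hval l hl]
    rw [ENNReal.toReal_ofReal (by positivity)]
    ring
  · filter_upwards [ae_nn hL] with l hl
    rw [hval l hl]
    exact ENNReal.ofReal_lt_top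

include hL ha in
lemma zetaMix_moment (k : ℕ) : ∫⁻ x, ENNReal.ofReal (x ^ k) ∂zetaMix FL a =
    (∫⁻ l, ENNReal.ofReal (l ^ k) ∂FL) *
      ENNReal.ofReal ((∫ n, logN n ^ k * Real.exp (-a * logN n) ∂Measure.count) / zetaR a) := by
  rw [zetaMix_lintegral ha (by fun_prop), ← lintegral_mul_const _ (by fun_prop)]
  refine lintegral_congr_ae ?_
  filter_upwards [ae_nn hL] with l hl
  rw [← zetaDist_lintegral_pow ha k, ← lintegral_const_mul _ (measurable_of_countable _)]
  refine lintegral_congr fun n => ?_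
  rw [mul_pow, ENNReal.ofReal_mul (pow_nonneg hl k)]

include hL ha in
lemma zetaMix_mean : ∫⁻ x, ENNReal.ofReal x ∂zetaMix FL a =
    (∫⁻ l, ENNReal.ofReal l ∂FL) * ENNReal.ofReal (-deriv zetaR a / zetaR a) := by
  simpa [zetaR_deriv ha] using zetaMix_moment hL ha 1

include hL ha in
lemma zetaMix_sq : ∫⁻ x, ENNReal.ofReal (x ^ 2) ∂zetaMix FL a =
    (∫⁻ l, ENNReal.ofReal (l ^ 2) ∂FL) * ENNReal.ofReal (deriv (deriv zetaR) a / zetaR a) := by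
  simpa [zetaR_deriv2 ha] using zetaMix_moment hL ha 2
end

/-! ### The equivalence and the variance -/

/-- The functional equation says that `F̂ = Ĝ ∘ σ` with `G = zetaMix FL a`. -/
lemma sol_iff {FT FL : Measure ℝ} [IsProbabilityMeasure FT] [IsProbabilityMeasure FL]
    (hT : FT (Set.Iio 0) = 0) (hL : FL (Set.Iio 0) = 0) {μ a : ℝ} (hμ : 0 < μ) (ha : 1 < a)
    (F : Measure ℝ) :
    Sol FT FL μ a F ↔ IsProbabilityMeasure F ∧ F (Set.Iio 0) = 0 ∧ (∫ x, x ∂F) = μ ∧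
      Integrable (fun x => x ^ 2) F ∧
      ∀ s : ℝ, 0 ≤ s → LS F s = LS (zetaMix FL a) (sigmaT F FT μ s) := by
  refine and_congr_right fun h1 => and_congr_right fun h2 => and_congr_right fun _ =>
    and_congr_right fun _ => forall₂_congr fun s hs => ?_
  rw [zetaMix_LS hL ha (sigmaT_nonneg h2 hT hμ.le hs)]

/-- `E[ΛL] = 1` exactly when `E[Λ] = -ζ(a)/ζ′(a)`. -/
lemma mean_iff {x : ℝ≥0∞} {z d : ℝ} (hz : 0 < z) (hd : d < 0) :
    x * ENNReal.ofReal (-d / z) = 1 ↔ x = ENNReal.ofReal (-(z / d)) := by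
  have hpos : 0 < -d / z := div_pos (by linarith) hz
  have e : -(z / d) = (-d / z)⁻¹ := by
    rw [inv_div, div_neg]
  rw [e, ENNReal.ofReal_inv_of_pos hpos]
  exact ⟨ENNReal.eq_inv_of_mul_eq_one_left, fun h => by
    rw [h]; exact ENNReal.inv_mul_cancel (by simpa using hpos) ENNReal.ofReal_ne_top⟩

lemma existsUnique_of_cond {FT FL : Measure ℝ} [IsProbabilityMeasure FT]
    [IsProbabilityMeasure FL] (hT : FT (Set.Iio 0) = 0) (hL : FL (Set.Iio 0) = 0) {μ a : ℝ}
    (hμ : 0 < μ) (ha : 1 < a) (h : Cond FT FL a) : ∃! F : Measure ℝ, Sol FT FL μ a F := by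
  obtain ⟨c1, c2, c3⟩ := h
  have := zetaMix_prob (FL := FL) ha
  have hG := zetaMix_Iio hL ha
  have hG1 : ∫⁻ x, ENNReal.ofReal x ∂zetaMix FL a = 1 := by
    rw [zetaMix_mean hL ha, mean_iff (zetaR_pos ha) (zetaR_deriv_neg ha), c2]
  have hG2 : Integrable (fun x => x ^ 2) (zetaMix FL a) := by
    refine integrable_sq_of_lintegral ?_
    rw [zetaMix_sq hL ha]
    exact ENNReal.mul_ne_top c3.ne ENNReal.ofReal_ne_top
  have hiG := integrable_of_sq hG2
  have hmG : ∫ x, x ∂zetaMix FL a = 1 := by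
    rw [integral_of_lintegral hG, hG1, ENNReal.toReal_one]
  have hiT := integrable_of_lintegral hT (c1.trans ENNReal.one_lt_top).ne
  have hT1 : ∫ t, t ∂FT < 1 := by
    rw [integral_of_lintegral hT]
    exact ENNReal.toReal_lt_of_lt_ofReal (by simpa using c1)
  obtain ⟨F, hF⟩ := fixed_exists hT hG hμ hiT hiG hmG hT1 hG2
  refine ⟨F, (sol_iff hT hL hμ ha F).2 hF, fun H hH => ?_⟩
  obtain ⟨f1, f2, f3, f4, f5⟩ := hF
  obtain ⟨g1, g2, g3, g4, g5⟩ := (sol_iff hT hL hμ ha H).1 hH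
  exact fixed_unique hT hG hμ hiT hiG hmG hT1 g2 f2
    (momBd_of_moments g2 g3 g4 (le_max_left _ (∫ x, x ^ 2 ∂F)))
    (momBd_of_moments f2 f3 f4 (le_max_right _ _)) g5 f5

/-- The first two coefficients of the functional equation at `0`: the value of `E[Λ]`, and an
equation `m₂ = b μ² + E[T] m₂` for the second moment. -/
lemma sol_identities {FT FL : Measure ℝ} [IsProbabilityMeasure FT]
    [IsProbabilityMeasure FL] (hT : FT (Set.Iio 0) = 0) (hL : FL (Set.Iio 0) = 0) {μ a : ℝ}
    (hμ : 0 < μ) (ha : 1 < a) {F : Measure ℝ} (h : Sol FT FL μ a F) :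
    ∫⁻ l, ENNReal.ofReal l ∂FL = ENNReal.ofReal (-(zetaR a / deriv zetaR a)) ∧
    ENNReal.ofReal (∫ x, x ^ 2 ∂F) =
      (∫⁻ l, ENNReal.ofReal (l ^ 2) ∂FL) * ENNReal.ofReal (deriv (deriv zetaR) a / zetaR a) *
        ENNReal.ofReal (μ ^ 2) +
      (∫⁻ t, ENNReal.ofReal t ∂FT) * ENNReal.ofReal (∫ x, x ^ 2 ∂F) := by
  obtain ⟨g1, g2, g3, g4, g5⟩ := (sol_iff hT hL hμ ha F).1 h
  have := zetaMix_prob (FL := FL) ha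
  obtain ⟨i1, i2⟩ := moment_identities g2 hT (zetaMix_Iio hL ha) hμ g4 g3 g5
  rw [zetaMix_mean hL ha, mean_iff (zetaR_pos ha) (zetaR_deriv_neg ha)] at i1
  rw [zetaMix_sq hL ha,
    ← ofReal_integral_eq_lintegral_ofReal g4 (ae_of_all _ fun x => sq_nonneg x)] at i2
  exact ⟨i1, i2⟩

lemma cond_of_sol {FT FL : Measure ℝ} [IsProbabilityMeasure FT]
    [IsProbabilityMeasure FL] (hT : FT (Set.Iio 0) = 0) (hL : FL (Set.Iio 0) = 0) {μ a : ℝ}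
    (hμ : 0 < μ) (ha : 1 < a) {F : Measure ℝ} (h : Sol FT FL μ a F) : Cond FT FL a := by
  obtain ⟨i1, i2⟩ := sol_identities hT hL hμ ha h
  set m := ENNReal.ofReal (∫ x, x ^ 2 ∂F)
  have hm : m ≠ ⊤ := ENNReal.ofReal_ne_top
  have hb : ENNReal.ofReal (deriv (deriv zetaR) a / zetaR a) ≠ 0 := by
    simpa using div_pos (zetaR_deriv2_pos ha) (zetaR_pos ha)
  have hμ2 : ENNReal.ofReal (μ ^ 2) ≠ 0 := by simpa using hμ.ne'
  have hL2 : ∫⁻ l, ENNReal.ofReal (l ^ 2) ∂FL ≠ 0 := by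
    -- otherwise `Λ = 0` almost surely, contradicting `E[Λ] > 0`
    intro h0
    rw [lintegral_eq_zero_iff (by fun_prop)] at h0
    have hz : ∫⁻ l, ENNReal.ofReal l ∂FL = 0 := by
      refine (lintegral_congr_ae ?_).trans lintegral_zero
      filter_upwards [h0] with l hl
      have hl' : l ^ 2 ≤ 0 := by simpa using hl
      have : l = 0 := by nlinarith [sq_nonneg l]
      simp [this]
    rw [i1] at hz
    have := div_neg_of_pos_of_neg (zetaR_pos ha) (zetaR_deriv_neg ha)
    rw [ENNReal.ofReal_eq_zero] at hz
    linarith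
  have hne := mul_ne_zero (mul_ne_zero hL2 hb) hμ2
  refine ⟨?_, i1, ?_⟩
  -- if `E[T] ≥ 1` then `m ≥ b μ² + m > m`, as `m` is finite and `b μ² > 0`
  · by_contra! hT1
    have h1 : m ≤ (∫⁻ t, ENNReal.ofReal t ∂FT) * m := le_mul_of_one_le_left' hT1
    have h2 : m < m + _ := ENNReal.lt_add_right hm hne
    refine absurd i2 (ne_of_lt (h2.trans_le ?_))
    rw [add_comm]
    gcongr
  · refine lt_top_iff_ne_top.2 fun htop => hm ?_
    rw [i2, htop, ENNReal.top_mul hb, ENNReal.top_mul hμ2, top_add]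

lemma variance_of_cond {FT FL : Measure ℝ} [IsProbabilityMeasure FT]
    [IsProbabilityMeasure FL] (hT : FT (Set.Iio 0) = 0) (hL : FL (Set.Iio 0) = 0) {μ a : ℝ}
    (hμ : 0 < μ) (ha : 1 < a) (hc : Cond FT FL a) {F : Measure ℝ} (h : Sol FT FL μ a F) :
    (∫ x, x ^ 2 ∂F) - (∫ x, x ∂F) ^ 2 =
      (deriv (deriv zetaR) a * (∫ l, l ^ 2 ∂FL) - zetaR a + zetaR a * (∫ t, t ∂FT)) /
        (zetaR a * (1 - (∫ t, t ∂FT))) * μ ^ 2 := by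
  obtain ⟨c1, c2, c3⟩ := hc
  have hz := zetaR_pos ha
  have hT1 : ∫ t, t ∂FT < 1 := by
    rw [integral_of_lintegral hT]
    exact ENNReal.toReal_lt_of_lt_ofReal (by simpa using c1)
  have i2 := congrArg ENNReal.toReal (sol_identities hT hL hμ ha h).2
  rw [ENNReal.toReal_add
      (ENNReal.mul_ne_top (ENNReal.mul_ne_top c3.ne ENNReal.ofReal_ne_top) ENNReal.ofReal_ne_top)
      (ENNReal.mul_ne_top (c1.trans ENNReal.one_lt_top).ne ENNReal.ofReal_ne_top),
    ENNReal.toReal_mul, ENNReal.toReal_mul, ENNReal.toReal_mul, ← integral_of_lintegral hT,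
    ← integral_sq_of_lintegral, ENNReal.toReal_ofReal (integral_nonneg fun x => sq_nonneg x),
    ENNReal.toReal_ofReal (div_pos (zetaR_deriv2_pos ha) hz).le,
    ENNReal.toReal_ofReal (sq_nonneg μ)] at i2
  rw [h.2.2.1]
  have hd : 1 - ∫ t, t ∂FT ≠ 0 := by linarith
  field_simp at i2 ⊢
  linear_combination i2

end

/-- Theorem 5: the moment conditions hold iff the Riemann-zeta type functional equation
has exactly one solution with mean `μ` and finite second moment; moreover, the solution
has variance `((ζ″(a) E[Λ²] − ζ(a) + ζ(a) E[T])/(ζ(a)(1 − E[T]))) μ²`. -/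
theorem stmt8 (μ a : ℝ) (hμ : 0 < μ) (ha : 1 < a) (FT FL : Measure ℝ)
    [IsProbabilityMeasure FT] [IsProbabilityMeasure FL]
    (hT : FT (Set.Iio 0) = 0) (hL : FL (Set.Iio 0) = 0) :
    (Cond FT FL a ↔ (∃! F : Measure ℝ, Sol FT FL μ a F)) ∧
    (Cond FT FL a → ∀ F : Measure ℝ, Sol FT FL μ a F →
      (∫ x, x ^ 2 ∂F) - (∫ x, x ∂F) ^ 2 =
        (deriv (deriv zetaR) a * (∫ l, l ^ 2 ∂FL) - zetaR a + zetaR a * (∫ t, t ∂FT)) /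
          (zetaR a * (1 - (∫ t, t ∂FT))) * μ ^ 2) := by
  refine ⟨⟨existsUnique_of_cond hT hL hμ ha, fun h => ?_⟩,
    fun hc F h => variance_of_cond hT hL hμ ha hc h⟩
  obtain ⟨F, hF, -⟩ := h
  exact cond_of_sol hT hL hμ ha hF
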